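/- arXiv:1607.02753 — 2 statements merged into one kernel-verified Lean document; each statement's English description precedes it below -/
import Mathlib

section
/- Let τ > 0 and let f ∈ C^∞([0,τ]) be pliable at 0, with f' > 0 and f'' > 0 on (0,τ]. Then there exist an integer n ≥ 2, sequences of positive reals (l_m)_{m≥1}, (r_m)_{m≥1}, angles (α_m)_{m≥1} ⊂ (0,π), and for each m ≥ 1 a compact interval J_m and a convex function F_m ∈ C^∞(J_m) whose graph Γ_m is a convex smoothing of an (l_m, r_m, α_m)-hinge, such that: (1) each Γ_m is modelled on f near its endpoints; (2) F_m'' > 0 on the interior of J_m and F_m'' = 0 at the endpoints of J_m (so Γ_m has positive curvature everywhere except at its endpoints); (3) for every integer r ≥ 0, sup_m ‖F_m‖_{C^r(J_m)} < ∞; (4) Σ_{m≥1} 2^m (l_m + r_m) < ∞ and Σ_{m≥1} 2^m (π − α_m) = π/n. -/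
open Set Filter Topology

noncomputable section

/-- The `C^r` norm `‖f‖_{C^r(J)} = ∑_{i=0}^{r} max_J |f^{(i)}|` of a function on a set
`J ⊆ ℝ` (derivatives taken within `J`). -/
def CrNorm (r : ℕ) (f : ℝ → ℝ) (J : Set ℝ) : ℝ :=
  ∑ i ∈ Finset.range (r + 1), ⨆ x : J, |iteratedDerivWithin i f J (x : ℝ)|

/-- The support of `g` relative to the interval `[a,b]`: the closure of the set of points
of `[a,b]` where `g` is nonzero. -/
def suppOn (a b : ℝ) (g : ℝ → ℝ) : Set ℝ :=
  closure {x | x ∈ Set.Icc a b ∧ g x ≠ 0}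

/-- The data `(k₀, cs, g)` is a series witnessing that `f` is pliable at the endpoint `c`
of the interval `[a,b]`:
* `f = Σ_{k ≥ k₀} cs k • g k` pointwise on `[a,b]`;
* the `cs k` are positive and super-exponentially converge to `0`;
* the `g k` are `C^∞` on `[a,b]`, their supports form a locally finite family of compact
  subsets of `[a,b] ∖ {c}`, and for every `r` the `C^r` norms of `g k` grow at most
  exponentially in `k`;
* there is `L > 0` such that whenever `0 < 2ε < b - a`, the set `J_ε` of indices `k ≥ k₀`
  whose support meets `{x ∈ [a,b] : ε ≤ |x - c| ≤ 2ε}` has at most `L` elements, and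
  `2^{-kL} ≤ ε` for every `k ∈ J_ε`. -/
structure IsPliableSeries (a b c : ℝ) (f : ℝ → ℝ) (k₀ : ℤ) (cs : ℤ → ℝ)
    (g : ℤ → ℝ → ℝ) : Prop where
  sum_eq : ∀ x ∈ Set.Icc a b,
    HasSum (fun k : {k : ℤ // k₀ ≤ k} => cs k.val * g k.val x) (f x)
  cs_pos : ∀ k : ℤ, k₀ ≤ k → 0 < cs k
  cs_superexp : ∀ γ : ℝ,
    Tendsto (fun k : ℤ => (2 : ℝ) ^ (γ * (k : ℝ)) * cs k) atTop (𝓝 0)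
  g_smooth : ∀ k : ℤ, k₀ ≤ k → ContDiffOn ℝ (⊤ : ℕ∞) (g k) (Set.Icc a b)
  supp_compact : ∀ k : ℤ, k₀ ≤ k → IsCompact (suppOn a b (g k))
  supp_subset : ∀ k : ℤ, k₀ ≤ k → suppOn a b (g k) ⊆ Set.Icc a b \ {c}
  supp_locFin : ∀ x ∈ Set.Icc a b \ {c}, ∃ U ∈ 𝓝 x,
    {k : ℤ | k₀ ≤ k ∧ (suppOn a b (g k) ∩ U).Nonempty}.Finite
  norm_growth : ∀ r : ℕ, ∃ γ M : ℝ, ∀ k : ℤ, k₀ ≤ k →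
    (2 : ℝ) ^ (γ * (k : ℝ)) * CrNorm r (g k) (Set.Icc a b) ≤ M
  index_bound : ∃ L : ℕ, 0 < L ∧ ∀ ε : ℝ, 0 < ε → 2 * ε < b - a →
    {k : ℤ | k₀ ≤ k ∧ (suppOn a b (g k) ∩
      {x ∈ Set.Icc a b | ε ≤ |x - c| ∧ |x - c| ≤ 2 * ε}).Nonempty}.Finite ∧
    {k : ℤ | k₀ ≤ k ∧ (suppOn a b (g k) ∩
      {x ∈ Set.Icc a b | ε ≤ |x - c| ∧ |x - c| ≤ 2 * ε}).Nonempty}.ncard ≤ L ∧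
    ∀ k : ℤ, k₀ ≤ k →
      (suppOn a b (g k) ∩ {x ∈ Set.Icc a b | ε ≤ |x - c| ∧ |x - c| ≤ 2 * ε}).Nonempty →
      (2 : ℝ) ^ (-(k : ℝ) * (L : ℝ)) ≤ ε

/-- `f` is pliable at the endpoint `c` of `[a,b]`. -/
def Pliable (a b c : ℝ) (f : ℝ → ℝ) : Prop :=
  ∃ (k₀ : ℤ) (cs : ℤ → ℝ) (g : ℤ → ℝ → ℝ), IsPliableSeries a b c f k₀ cs g

/-- The point `(x, y)` of the Euclidean plane. -/
def pt2 (x y : ℝ) : EuclideanSpace ℝ (Fin 2) :=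
  (WithLp.equiv 2 (Fin 2 → ℝ)).symm ![x, y]

lemma pliable_bound {τ : ℝ} (hτ : 0 < τ) {f : ℝ → ℝ} (h : Pliable 0 τ 0 f) (n : ℕ) :
    ∃ C : ℝ, ∀ x, 0 ≤ x → x < τ / 2 → |f x| ≤ C * x ^ n := by
  obtain ⟨k₀, cs, g, S⟩ := h
  obtain ⟨L, hL, hJ⟩ := S.index_bound
  obtain ⟨γ, M, hM⟩ := S.norm_growth 0
  have hgb : ∀ k, k₀ ≤ k → ∀ x ∈ Icc 0 τ, |g k x| ≤ CrNorm 0 (g k) (Icc 0 τ) := by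
    intro k hk x hx
    have hc : ContinuousOn (fun x => |g k x|) (Icc 0 τ) := (S.g_smooth k hk).continuousOn.abs
    have hb := (isCompact_Icc.image_of_continuousOn hc).bddAbove
    simp only [CrNorm, zero_add, Finset.range_one, Finset.sum_singleton, iteratedDerivWithin_zero]
    have hb' : BddAbove (range fun y : Icc (0:ℝ) τ => |g k y|) := by
      obtain ⟨B, hB⟩ := hb
      refine ⟨B, ?_⟩
      rintro _ ⟨y, rfl⟩
      exact hB ⟨y, y.2, rfl⟩
    exact le_ciSup hb' ⟨x, hx⟩
  obtain ⟨C', hC'0, hC'⟩ : ∃ C' : ℝ, 0 ≤ C' ∧ ∀ k : ℤ, k₀ ≤ k →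
      (2 : ℝ) ^ ((L * n - γ) * (k : ℝ)) * cs k ≤ C' := by
    have h1 := S.cs_superexp (L * n - γ)
    have h2 := h1.eventually (gt_mem_nhds (zero_lt_one))
    obtain ⟨k1, hk1⟩ := eventually_atTop.1 h2
    refine ⟨1 + ∑ k ∈ Finset.Icc k₀ k1, |(2 : ℝ) ^ ((L * n - γ) * (k : ℝ)) * cs k|,
      by positivity, ?_⟩
    intro k hk
    have hs : 0 ≤ ∑ k ∈ Finset.Icc k₀ k1, |(2 : ℝ) ^ ((L * n - γ) * (k : ℝ)) * cs k| := by
      positivity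
    by_cases hkk : k1 ≤ k
    · have := hk1 k hkk
      linarith
    · have : |(2 : ℝ) ^ ((L * n - γ) * (k : ℝ)) * cs k| ≤ _ :=
        Finset.single_le_sum (f := fun k : ℤ => |(2 : ℝ) ^ ((L * n - γ) * (k : ℝ)) * cs k|)
          (s := Finset.Icc k₀ k1)
          (fun i _ => abs_nonneg _) (Finset.mem_Icc.2 ⟨hk, by omega⟩)
      have h3 := le_abs_self ((2 : ℝ) ^ ((L * n - γ) * (k : ℝ)) * cs k)
      linarith
  refine ⟨L * (C' * |M|), ?_⟩
  intro x hx0 hx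
  have hxI : x ∈ Icc 0 τ := ⟨hx0, by linarith⟩
  have hsum := S.sum_eq x hxI
  have hsupp : ∀ k, g k x ≠ 0 → x ∈ suppOn 0 τ (g k) := fun k hk =>
    subset_closure ⟨hxI, hk⟩
  rcases hx0.eq_or_lt with h0 | hxpos
  · have : ∀ k : {k : ℤ // k₀ ≤ k}, cs k.val * g k.val x = 0 := by
      intro k
      by_cases hg : g k x = 0
      · simp [hg]
      · exact absurd h0.symm (S.supp_subset k k.2 (hsupp _ hg)).2
    simp only [this] at hsum
    rw [hsum.unique hasSum_zero, abs_zero]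
    positivity
  obtain ⟨hfin, hcard, hle⟩ := hJ x hxpos (by linarith)
  set J : Set ℤ := {k : ℤ | k₀ ≤ k ∧ (suppOn 0 τ (g k) ∩
      {y ∈ Set.Icc 0 τ | x ≤ |y - 0| ∧ |y - 0| ≤ 2 * x}).Nonempty} with hJdef
  have hmem : ∀ k, k₀ ≤ k → g k x ≠ 0 → k ∈ J := by
    intro k hk hg
    refine ⟨hk, x, hsupp k hg, hxI, ?_⟩
    rw [sub_zero, abs_of_pos hxpos]
    constructor <;> linarith
  have hterm : ∀ k ∈ J, |cs k * g k x| ≤ C' * |M| * x ^ n := by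
    intro k hk
    have h1 := hC' k hk.1
    have h2 := hM k hk.1
    have h3 := hgb k hk.1 x hxI
    have h4 := hle k hk.1 hk.2
    have hcp := S.cs_pos k hk.1
    rw [abs_mul, abs_of_pos hcp]
    have p1 : (0:ℝ) < 2 ^ ((L * n - γ) * (k : ℝ)) := by positivity
    have p2 : (0:ℝ) < 2 ^ (γ * (k : ℝ)) := by positivity
    have e1 : (2:ℝ) ^ ((L * n - γ) * (k : ℝ)) * 2 ^ (γ * (k : ℝ)) *
        ((2 : ℝ) ^ (-(k : ℝ) * (L : ℝ))) ^ n = 1 := by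
      rw [← Real.rpow_natCast, ← Real.rpow_mul (by norm_num), ← Real.rpow_add (by norm_num),
        ← Real.rpow_add (by norm_num)]
      rw [show ((L * n - γ) * (k : ℝ) + γ * k + -(k:ℝ) * L * n) = 0 by ring, Real.rpow_zero]
    have hA : 2 ^ (γ * (k : ℝ)) * |g k x| ≤ |M| :=
      (mul_le_mul_of_nonneg_left h3 p2.le).trans (h2.trans (le_abs_self M))
    have hB : (2:ℝ) ^ ((L * n - γ) * (k : ℝ)) * cs k * (2 ^ (γ * (k : ℝ)) * |g k x|) ≤ C' * |M| :=
      mul_le_mul h1 hA (by positivity) hC'0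
    have hD : ((2 : ℝ) ^ (-(k : ℝ) * (L : ℝ))) ^ n ≤ x ^ n :=
      pow_le_pow_left₀ (by positivity) h4 n
    calc cs k * |g k x| = ((2:ℝ) ^ ((L * n - γ) * (k : ℝ)) * cs k * (2 ^ (γ * (k : ℝ)) * |g k x|)) *
          ((2 : ℝ) ^ (-(k : ℝ) * (L : ℝ))) ^ n := by
            linear_combination (-(cs k * |g k x|)) * e1
      _ ≤ C' * |M| * x ^ n := mul_le_mul hB hD (by positivity) (by positivity)
  have hfin' : {k : {k : ℤ // k₀ ≤ k} | k.val ∈ J}.Finite :=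
    hfin.preimage (Subtype.val_injective.injOn)
  have hs2 := hasSum_sum_of_ne_finset_zero (L := SummationFilter.unconditional _)
    (f := fun k : {k : ℤ // k₀ ≤ k} => cs k.val * g k.val x)
    (s := hfin'.toFinset) (by
      intro k hk
      by_contra hne
      apply hk
      rw [Set.Finite.mem_toFinset]
      exact hmem k k.2 (fun h0 => hne (by simp [h0])))
  rw [hsum.unique hs2]
  refine (Finset.abs_sum_le_sum_abs _ _).trans ?_
  refine (Finset.sum_le_card_nsmul _ _ (C' * |M| * x ^ n) ?_).trans ?_
  · intro k hk
    exact hterm k (by simpa using hk)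
  · have hc : hfin'.toFinset.card ≤ L := by
      rw [← Set.ncard_eq_toFinset_card _ hfin']
      refine le_trans ?_ hcard
      refine Set.ncard_le_ncard_of_injOn (fun k : {k : ℤ // k₀ ≤ k} => k.val) (fun k hk => hk) ?_ hfin
      exact Subtype.val_injective.injOn
    rw [nsmul_eq_mul, mul_assoc (L:ℝ)]
    have : ((hfin'.toFinset.card : ℕ) : ℝ) ≤ L := by exact_mod_cast hc
    exact mul_le_mul_of_nonneg_right this (by positivity)

lemma flat_of_bound {τ : ℝ} (hτ : 0 < τ) {f : ℝ → ℝ}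
    (hf : ContDiffOn ℝ (⊤ : ℕ∞) f (Icc 0 τ))
    (hb : ∀ n : ℕ, ∃ C : ℝ, ∀ x, 0 ≤ x → x < τ / 2 → |f x| ≤ C * x ^ n) (i : ℕ) :
    iteratedDerivWithin i f (Icc 0 τ) 0 = 0 := by
  induction i using Nat.strong_induction_on with
  | _ i ih =>
  obtain ⟨C, hC⟩ := hb (i + 1)
  have hcont : ContinuousOn (iteratedDerivWithin (i + 1) f (Icc 0 τ)) (Icc 0 τ) :=
    hf.continuousOn_iteratedDerivWithin (by exact_mod_cast le_top) (uniqueDiffOn_Icc hτ)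
  obtain ⟨D, hD⟩ := isCompact_Icc.exists_bound_of_continuousOn hcont
  have hD0 : 0 ≤ D := (norm_nonneg _).trans (hD 0 ⟨le_rfl, hτ.le⟩)
  have key : ∀ x, 0 < x → x < τ / 2 →
      |iteratedDerivWithin i f (Icc 0 τ) 0| ≤ i.factorial * (C + D) * x := by
    intro x hx hx2
    have h1 := taylor_mean_remainder_bound (n := i) hτ.le
      (hf.of_le (by exact_mod_cast le_top)) (x := x) ⟨hx.le, by linarith⟩ hD
    have h2 := hC x hx.le hx2
    rw [taylor_within_apply, Finset.sum_range_succ, Finset.sum_eq_zero, zero_add, sub_zero,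
      Real.norm_eq_abs, smul_eq_mul] at h1
    swap
    · intro k hk
      rw [ih k (Finset.mem_range.1 hk), smul_zero]
    have hfac : (0:ℝ) < i.factorial := by exact_mod_cast i.factorial_pos
    have hfac1 : (1:ℝ) ≤ i.factorial := by exact_mod_cast i.factorial_pos
    have h3 : D * x ^ (i + 1) / i.factorial ≤ D * x ^ (i + 1) :=
      div_le_self (by positivity) hfac1
    set d := iteratedDerivWithin i f (Icc 0 τ) 0
    have h4 : |((i.factorial : ℝ)⁻¹ * x ^ i) * d| ≤ (C + D) * x ^ (i + 1) := by
      have := abs_sub_abs_le_abs_sub (((i.factorial : ℝ)⁻¹ * x ^ i) * d) (f x)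
      rw [abs_sub_comm] at this
      linarith
    rw [abs_mul, abs_of_pos (by positivity)] at h4
    have hxi : 0 < x ^ i := by positivity
    have h5 : (x ^ i) * |d| ≤ x ^ i * (i.factorial * (C + D) * x) := by
      have := mul_le_mul_of_nonneg_left h4 hfac.le
      calc x ^ i * |d| = i.factorial * ((i.factorial : ℝ)⁻¹ * x ^ i * |d|) := by field_simp
        _ ≤ _ := this
        _ = _ := by ring
    exact le_of_mul_le_mul_left h5 hxi
  have ht : Tendsto (fun x : ℝ => i.factorial * (C + D) * x) (𝓝[>] 0) (𝓝 0) := by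
    have : Continuous (fun x : ℝ => i.factorial * (C + D) * x) := by fun_prop
    have h := this.tendsto 0
    simp only [mul_zero] at h
    exact h.mono_left nhdsWithin_le_nhds
  have : |iteratedDerivWithin i f (Icc 0 τ) 0| ≤ 0 := by
    refine ge_of_tendsto ht ?_
    filter_upwards [Ioo_mem_nhdsGT (show (0:ℝ) < τ / 2 by linarith)] with x hx
    exact key x hx.1 hx.2
  exact abs_nonpos_iff.1 this

lemma ext_contDiffOn {τ : ℝ} (hτ : 0 < τ) (n : ℕ) : ∀ u : ℝ → ℝ,
    ContDiffOn ℝ (⊤ : ℕ∞) u (Icc 0 τ) →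
    (∀ i, iteratedDerivWithin i u (Icc 0 τ) 0 = 0) →
    ContDiffOn ℝ n (fun x => if x ≤ 0 then 0 else u x) (Iio τ) := by
  have hd : ∀ u : ℝ → ℝ, ContDiffOn ℝ (⊤ : ℕ∞) u (Icc 0 τ) →
      (∀ i, iteratedDerivWithin i u (Icc 0 τ) 0 = 0) → ∀ x ∈ Iio τ,
      HasDerivAt (fun x => if x ≤ 0 then 0 else u x)
        (if x ≤ 0 then 0 else derivWithin u (Icc 0 τ) x) x := by
    intro u hu h0 x hx
    have hdiff : DifferentiableOn ℝ u (Icc 0 τ) := hu.differentiableOn (by simp)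
    rcases lt_trichotomy x 0 with hneg | rfl | hpos
    · rw [if_pos hneg.le]
      refine (hasDerivAt_const x (0:ℝ)).congr_of_eventuallyEq ?_
      filter_upwards [Iio_mem_nhds hneg] with y hy
      rw [if_pos (le_of_lt hy)]
    · rw [if_pos le_rfl]
      have hu0 : u 0 = 0 := by simpa using h0 0
      have hu1 : derivWithin u (Icc 0 τ) 0 = 0 := by
        have := h0 1
        rwa [iteratedDerivWithin_one] at this
      have hR : HasDerivWithinAt (fun x => if x ≤ 0 then 0 else u x) 0 (Ici 0) 0 := by
        have h1 := (hdiff 0 ⟨le_rfl, hτ.le⟩).hasDerivWithinAt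
        rw [hu1] at h1
        have h2 : HasDerivWithinAt u 0 (Ici 0) 0 :=
          h1.mono_of_mem_nhdsWithin (Icc_mem_nhdsGE hτ)
        refine h2.congr (fun y hy => ?_) (by simp [hu0])
        by_cases hy0 : y ≤ 0
        · have : y = 0 := le_antisymm hy0 hy
          simp [this, hu0]
        · simp [hy0]
      have hLft : HasDerivWithinAt (fun x => if x ≤ 0 then 0 else u x) 0 (Iic 0) 0 := by
        refine (hasDerivWithinAt_const (0:ℝ) (Iic 0) (0:ℝ)).congr (fun y hy => ?_) (by simp)
        rw [if_pos (mem_Iic.1 hy)]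
      have := hLft.union hR
      rwa [Iic_union_Ici, hasDerivWithinAt_univ] at this
    · rw [if_neg (not_le.2 hpos)]
      have h1 := (hdiff x ⟨hpos.le, le_of_lt hx⟩).hasDerivWithinAt
      have h2 : HasDerivAt u (derivWithin u (Icc 0 τ) x) x :=
        h1.hasDerivAt (Icc_mem_nhds hpos hx)
      refine h2.congr_of_eventuallyEq ?_
      filter_upwards [Ioi_mem_nhds hpos] with y hy
      rw [if_neg (not_le.2 hy)]
  induction n with
  | zero =>
    intro u hu h0
    rw [Nat.cast_zero, contDiffOn_zero]
    exact fun x hx => (hd u hu h0 x hx).continuousAt.continuousWithinAt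
  | succ n ih =>
    intro u hu h0
    push_cast
    rw [contDiffOn_succ_iff_deriv_of_isOpen isOpen_Iio]
    refine ⟨fun x hx => (hd u hu h0 x hx).differentiableAt.differentiableWithinAt, by simp, ?_⟩
    have h3 := ih (derivWithin u (Icc 0 τ))
      (hu.derivWithin (uniqueDiffOn_Icc hτ) (by simp))
      (fun i => by rw [← iteratedDerivWithin_succ']; exact h0 (i + 1))
    exact h3.congr (fun x hx => (hd u hu h0 x hx).deriv)

/-- global antiderivative -/
lemma exists_antideriv (P : ℝ → ℝ) (hP : ContDiff ℝ (⊤ : ℕ∞) P) :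
    ∃ Q : ℝ → ℝ, ContDiff ℝ (⊤ : ℕ∞) Q ∧ (∀ x, HasDerivAt Q (P x) x) ∧ Q 0 = 0 := by
  have hd : ∀ x, HasDerivAt (fun x => ∫ y in (0:ℝ)..x, P y) (P x) x := fun x =>
    hP.continuous.integral_hasStrictDerivAt 0 x |>.hasDerivAt
  refine ⟨fun x => ∫ y in (0:ℝ)..x, P y, ?_, hd, by simp⟩
  rw [contDiff_infty_iff_deriv]
  refine ⟨fun x => (hd x).differentiableAt, ?_⟩
  have : deriv (fun x => ∫ y in (0:ℝ)..x, P y) = P := funext fun x => (hd x).deriv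
  rwa [this]

/-- vanishing derivative and value at a point on an interval -/
lemma eq_zero_of_deriv {a b x0 : ℝ} {φ φ' : ℝ → ℝ} (hd : ∀ x ∈ Icc a b, HasDerivAt φ (φ' x) x)
    (h0 : ∀ x ∈ Icc a b, φ' x = 0) (hx0 : x0 ∈ Icc a b) (h : φ x0 = 0) :
    ∀ x ∈ Icc a b, φ x = 0 := by
  intro x hx
  have := Convex.norm_image_sub_le_of_norm_hasDerivWithin_le (f := φ) (f' := φ') (C := 0)
    (fun y hy => (hd y hy).hasDerivWithinAt) (fun y hy => by rw [h0 y hy, norm_zero])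
    (convex_Icc a b) hx0 hx
  rw [h, sub_zero, zero_mul] at this
  exact norm_le_zero_iff.1 this

lemma exists_ext {τ : ℝ} (hτ : 0 < τ) {f : ℝ → ℝ}
    (hf : ContDiffOn ℝ (⊤ : ℕ∞) f (Icc 0 τ))
    (hflat : ∀ i, iteratedDerivWithin i f (Icc 0 τ) 0 = 0)
    (hf' : ∀ x ∈ Set.Ioc 0 τ, 0 < derivWithin f (Set.Icc 0 τ) x)
    (hf'' : ∀ x ∈ Set.Ioc 0 τ, 0 < iteratedDerivWithin 2 f (Set.Icc 0 τ) x) :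
    ∃ e e1 e2 : ℝ → ℝ, ContDiff ℝ (⊤ : ℕ∞) e1 ∧ ContDiff ℝ (⊤ : ℕ∞) e2 ∧
      (∀ x, HasDerivAt e (e1 x) x) ∧ (∀ x, HasDerivAt e1 (e2 x) x) ∧ (∀ x, 0 ≤ e1 x) ∧
      (∀ x ≤ 0, e x = 0) ∧ (∀ x ≤ 0, e1 x = 0) ∧ (∀ x ≤ 0, e2 x = 0) ∧
      (∀ x ∈ Ioo 0 (τ / 2), 0 < e2 x) ∧ (∀ x ∈ Icc 0 (τ / 2), e x = f x) := by
  set v := derivWithin f (Icc 0 τ) with hv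
  have hvs : ContDiffOn ℝ (⊤ : ℕ∞) v (Icc 0 τ) := hf.derivWithin (uniqueDiffOn_Icc hτ) (by simp)
  have hvflat : ∀ i, iteratedDerivWithin i v (Icc 0 τ) 0 = 0 := fun i => by
    rw [hv, ← iteratedDerivWithin_succ']; exact hflat (i + 1)
  have hext : ContDiffOn ℝ (⊤ : ℕ∞) (fun x => if x ≤ 0 then 0 else v x) (Iio τ) := by
    rw [contDiffOn_infty]
    exact fun n => ext_contDiffOn hτ n v hvs hvflat
  set χ : ℝ → ℝ := fun x => Real.smoothTransition (3 - 4 * (x / τ)) with hχ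
  have hχs : ContDiff ℝ (⊤ : ℕ∞) χ := Real.smoothTransition.contDiff.comp (by fun_prop)
  set e1 : ℝ → ℝ := fun x => (if x ≤ 0 then 0 else v x) * χ x with he1
  have hχ0 : ∀ x, 3 * τ / 4 ≤ x → χ x = 0 := by
    intro x hx
    apply Real.smoothTransition.zero_of_nonpos
    have : 3 / 4 ≤ x / τ := by rw [le_div_iff₀ hτ]; linarith
    linarith
  have hχ1 : ∀ x, x ≤ τ / 2 → χ x = 1 := by
    intro x hx
    apply Real.smoothTransition.one_of_one_le
    have : x / τ ≤ 1 / 2 := by rw [div_le_iff₀ hτ]; linarith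
    linarith
  have he1s : ContDiff ℝ (⊤ : ℕ∞) e1 := by
    rw [contDiff_iff_contDiffAt]
    intro x
    by_cases hx : x < τ
    · exact (hext.contDiffAt (Iio_mem_nhds hx)).mul hχs.contDiffAt
    · have : e1 =ᶠ[𝓝 x] fun _ => 0 := by
        filter_upwards [Ioi_mem_nhds (show 3 * τ / 4 < x by linarith)] with y hy
        simp only [he1]
        rw [hχ0 y (le_of_lt hy), mul_zero]
      exact contDiffAt_const.congr_of_eventuallyEq this
  obtain ⟨e, hes, hed, he0⟩ := exists_antideriv e1 he1s
  have he1neg : ∀ x ≤ 0, e1 x = 0 := fun x hx => by simp [he1, hx]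
  have he1d : ∀ x, HasDerivAt e1 (deriv e1 x) x := fun x =>
    ((he1s.differentiable (by simp)) x).hasDerivAt
  have he2s : ContDiff ℝ (⊤ : ℕ∞) (deriv e1) := (contDiff_infty_iff_deriv.1 he1s).2
  refine ⟨e, e1, deriv e1, he1s, he2s, hed, he1d, ?_, ?_, he1neg, ?_, ?_, ?_⟩
  · intro x
    by_cases hx : x ≤ 0
    · rw [he1neg x hx]
    · push Not at hx
      by_cases hx2 : x ≤ τ
      · refine mul_nonneg ?_ (Real.smoothTransition.nonneg _)
        rw [if_neg (not_le.2 hx)]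
        exact (hf' x ⟨hx, hx2⟩).le
      · simp only [he1]
        rw [hχ0 x (by linarith), mul_zero]
  · intro x hx
    exact eq_zero_of_deriv (a := x) (b := 0) (fun y _ => hed y) (fun y hy => he1neg y hy.2)
      ⟨hx, le_rfl⟩ he0 x ⟨le_rfl, hx⟩
  · have hlt : ∀ x < 0, deriv e1 x = 0 := by
      intro x hx
      have : e1 =ᶠ[𝓝 x] fun _ => 0 := by
        filter_upwards [Iio_mem_nhds hx] with y hy
        exact he1neg y (le_of_lt hy)
      rw [this.deriv_eq, deriv_const]
    intro x hx
    rcases hx.lt_or_eq with h | rfl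
    · exact hlt x h
    · have h1 : Tendsto (deriv e1) (𝓝[<] 0) (𝓝 (deriv e1 0)) :=
        (he2s.continuous.tendsto 0).mono_left nhdsWithin_le_nhds
      have h2 : Tendsto (deriv e1) (𝓝[<] 0) (𝓝 0) := by
        refine tendsto_const_nhds.congr' ?_
        filter_upwards [self_mem_nhdsWithin] with y hy
        exact (hlt y hy).symm
      exact tendsto_nhds_unique h1 h2
  · intro x hx
    have h1 : e1 =ᶠ[𝓝 x] v := by
      filter_upwards [Ioo_mem_nhds hx.1 hx.2] with y hy
      simp only [he1]
      rw [hχ1 y hy.2.le, if_neg (not_le.2 hy.1), mul_one]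
    rw [h1.deriv_eq]
    have h2 := hf'' x ⟨hx.1, by linarith [hx.2]⟩
    rw [iteratedDerivWithin_succ', iteratedDerivWithin_one] at h2
    rwa [derivWithin_of_mem_nhds (Icc_mem_nhds hx.1 (by linarith [hx.2]))] at h2
  · intro x hx
    have hfd : ∀ y ∈ Icc 0 (τ / 2), HasDerivWithinAt (fun y => e y - f y) 0 (Icc 0 (τ / 2)) y := by
      intro y hy
      have h1 : HasDerivWithinAt f (v y) (Icc 0 τ) y :=
        (hf.differentiableOn (by simp) y ⟨hy.1, by linarith [hy.2]⟩).hasDerivWithinAt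
      have h2 := (hed y).hasDerivWithinAt (s := Icc 0 (τ / 2)) |>.sub
        (h1.mono (Icc_subset_Icc le_rfl (by linarith)))
      suffices h4 : e1 y = v y by
        rw [h4, sub_self] at h2
        exact h2
      simp only [he1]
      rw [hχ1 y hy.2, mul_one]
      by_cases hy0 : y ≤ 0
      · have : y = 0 := le_antisymm hy0 hy.1
        have hv0 : v 0 = 0 := by simpa using hvflat 0
        simp [this, hv0]
      · simp [hy0]
    have h3 := Convex.norm_image_sub_le_of_norm_hasDerivWithin_le (f := fun y => e y - f y)
      (f' := fun _ => 0) (C := 0) hfd (by simp) (convex_Icc _ _) (x := 0) (y := x)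
      ⟨le_rfl, by linarith⟩ hx
    have hf0 : f 0 = 0 := by simpa using hflat 0
    rw [he0, hf0, zero_mul, sub_zero, sub_zero] at h3
    exact sub_eq_zero.1 (norm_le_zero_iff.1 h3)

lemma seq_contDiff (a : ℕ → ℝ → ℝ) (hd : ∀ j x, HasDerivAt (a j) (a (j + 1) x) x) :
    ContDiff ℝ (⊤ : ℕ∞) (a 0) ∧ ∀ j, iteratedDeriv j (a 0) = a j := by
  have h1 : ∀ j, iteratedDeriv j (a 0) = a j := by
    intro j
    induction j with
    | zero => simp
    | succ j ih =>
      rw [iteratedDeriv_succ, ih]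
      exact funext fun x => (hd j x).deriv
  refine ⟨?_, h1⟩
  apply contDiff_of_differentiable_iteratedDeriv
  intro m _
  rw [h1]
  exact fun x => (hd m x).differentiableAt

lemma seq_zero (a : ℕ → ℝ → ℝ) (hd : ∀ j x, HasDerivAt (a j) (a (j + 1) x) x)
    (h0 : ∀ s ≤ 0, a 0 s = 0) (j : ℕ) : ∀ s ≤ 0, a j s = 0 := by
  induction j with
  | zero => exact h0
  | succ j ih =>
    have hlt : ∀ x < 0, a (j + 1) x = 0 := by
      intro x hx
      have : a j =ᶠ[𝓝 x] fun _ => 0 := by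
        filter_upwards [Iio_mem_nhds hx] with y hy
        exact ih y (le_of_lt hy)
      rw [← (hd j x).deriv, this.deriv_eq, deriv_const]
    intro x hx
    rcases hx.lt_or_eq with h | rfl
    · exact hlt x h
    · have h1 : Tendsto (a (j + 1)) (𝓝[<] 0) (𝓝 (a (j + 1) 0)) :=
        ((hd (j + 1) 0).continuousAt).tendsto.mono_left nhdsWithin_le_nhds
      have h2 : Tendsto (a (j + 1)) (𝓝[<] 0) (𝓝 0) := by
        refine tendsto_const_nhds.congr' ?_
        filter_upwards [self_mem_nhdsWithin] with y hy
        exact (hlt y hy).symm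
      exact tendsto_nhds_unique h1 h2

lemma flat_pow (a : ℕ → ℝ → ℝ) (hd : ∀ j x, HasDerivAt (a j) (a (j + 1) x) x)
    (h0 : ∀ j, a j 0 = 0) (R C : ℝ) (K : ℕ) : ∀ j : ℕ,
    (∀ s ∈ Icc 0 R, |a (j + K) s| ≤ C) → ∀ s ∈ Icc 0 R, |a j s| ≤ C * s ^ K := by
  induction K with
  | zero => intro j h s hs; simpa using h s hs
  | succ K ih =>
    intro j h s hs
    have h1 := ih (j + 1) (fun s hs => by rw [add_assoc, add_comm 1 K]; exact h s hs)
    have hC : 0 ≤ C := (abs_nonneg _).trans (h 0 ⟨le_rfl, hs.1.trans hs.2⟩)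
    have h2 := Convex.norm_image_sub_le_of_norm_hasDerivWithin_le (f := a j) (f' := a (j + 1))
      (s := Icc 0 s) (C := C * s ^ K) (x := 0) (y := s)
      (fun x _ => (hd j x).hasDerivWithinAt)
      (fun x hx => (h1 x ⟨hx.1, hx.2.trans hs.2⟩).trans
        (mul_le_mul_of_nonneg_left (pow_le_pow_left₀ hx.1 hx.2 K) hC))
      (convex_Icc _ _) ⟨le_rfl, hs.1⟩ ⟨hs.1, le_rfl⟩
    rw [h0 j, sub_zero, sub_zero, Real.norm_eq_abs, Real.norm_eq_abs, abs_of_nonneg hs.1] at h2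
    rw [pow_succ, ← mul_assoc]
    exact h2

lemma exists_inv {e e1 : ℝ → ℝ} (hed : ∀ x, HasDerivAt e (e1 x) x)
    (he1 : ∀ x, 0 ≤ e1 x) (he0 : ∀ x ≤ 0, e x = 0) (t k : ℝ) (ht : 0 ≤ t) (hk : 0 < k) :
    ∃ Y : ℝ → ℝ, (∀ s, Y s + t * e (Y s) = k * s) ∧
      (∀ s, HasDerivAt Y (k / (1 + t * e1 (Y s))) s) ∧ (∀ s ≤ 0, Y s ≤ 0) ∧
      (∀ s, 0 < s → 0 < Y s) ∧ ∀ s, 0 ≤ s → Y s ≤ k * s := by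
  have hmono : Monotone e := monotone_of_hasDerivAt_nonneg hed he1
  have hnn : ∀ x, 0 ≤ e x := by
    intro x
    rcases le_total x 0 with h | h
    · rw [he0 x h]
    · have := hmono h
      rwa [he0 0 le_rfl] at this
  set σ : ℝ → ℝ := fun y => y + t * e y with hσ
  have hσd : ∀ y, HasDerivAt σ (1 + t * e1 y) y := fun y =>
    (hasDerivAt_id y).add ((hed y).const_mul t)
  have hσp : ∀ y, 0 < 1 + t * e1 y := fun y => by
    have := mul_nonneg ht (he1 y); linarith
  have hσm : StrictMono σ := strictMono_of_hasDerivAt_pos hσd hσp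
  have hσc : Continuous σ := continuous_iff_continuousAt.2 fun y => (hσd y).continuousAt
  have hsurj : Function.Surjective σ := by
    refine hσc.surjective ?_ ?_
    · refine tendsto_atTop_mono (fun y => ?_) tendsto_id
      have := mul_nonneg ht (hnn y)
      simp only [hσ, id]; linarith
    · refine tendsto_id.congr' ?_
      filter_upwards [eventually_le_atBot 0] with y hy
      simp [hσ, he0 y hy]
  set E := hσm.orderIsoOfSurjective σ hsurj with hE
  have hEs : ∀ z, σ (E.symm z) = z := fun z => E.apply_symm_apply z
  have hσ0 : σ 0 = 0 := by simp [hσ, he0 0 le_rfl]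
  have hE0 : E.symm 0 = 0 := hσm.injective (by rw [hEs, hσ0])
  have hEc : Continuous E.symm := E.symm.continuous
  have hEd : ∀ z, HasDerivAt E.symm (1 + t * e1 (E.symm z))⁻¹ z := fun z =>
    HasDerivAt.of_local_left_inverse hEc.continuousAt (hσd _) (hσp _).ne'
      (Eventually.of_forall hEs)
  refine ⟨fun s => E.symm (k * s), fun s => hEs (k * s), ?_, ?_, ?_, ?_⟩
  · intro s
    have h1 : HasDerivAt (fun s : ℝ => k * s) k s := by
      simpa using (hasDerivAt_id s).const_mul k
    have := (hEd (k * s)).comp s h1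
    rw [div_eq_inv_mul]
    exact this
  · intro s hs
    have := E.symm.monotone (show k * s ≤ 0 from mul_nonpos_of_nonneg_of_nonpos hk.le hs)
    rwa [hE0] at this
  · intro s hs
    have := E.symm.strictMono (show 0 < k * s by positivity)
    rwa [hE0] at this
  · intro s hs
    have := hEs (k * s)
    have h2 := mul_nonneg ht (hnn (E.symm (k * s)))
    simp only [hσ] at this
    linarith

lemma exists_family {τ : ℝ} {e e1 e2 : ℝ → ℝ} (he1s : ContDiff ℝ (⊤ : ℕ∞) e1)
    (he2s : ContDiff ℝ (⊤ : ℕ∞) e2)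
    (hed : ∀ x, HasDerivAt e (e1 x) x) (he1d : ∀ x, HasDerivAt e1 (e2 x) x)
    (he1 : ∀ x, 0 ≤ e1 x) (he0 : ∀ x ≤ 0, e x = 0) (he10 : ∀ x ≤ 0, e1 x = 0)
    (he20 : ∀ x ≤ 0, e2 x = 0) (he2 : ∀ x ∈ Ioo 0 (τ / 2), 0 < e2 x) :
    ∃ (H : ℝ → ℕ → ℝ → ℝ) (Y G G1 : ℝ → ℝ → ℝ) (k : ℝ → ℝ),
      (∀ u j s, HasDerivAt (H u j) (H u (j + 1) s) s) ∧
      (∀ u j, ∀ s ≤ 0, H u j s = 0) ∧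
      (∀ u ∈ Icc (0:ℝ) 1, ∀ s ∈ Ioo 0 (τ / 4), 0 < H u 0 s) ∧
      (∀ j K : ℕ, ∃ C : ℝ, 0 ≤ C ∧ ∀ u ∈ Icc (0:ℝ) 1, ∀ s ∈ Icc (0:ℝ) (1 / 2),
        |H u j s| ≤ C * s ^ K) ∧
      (∀ s, H 0 0 s = e2 s) ∧
      (∀ u s, HasDerivAt (G u) (G1 u s) s) ∧ (∀ u s, HasDerivAt (G1 u) (H u 0 s) s) ∧
      (∀ u, G u 0 = 0) ∧ (∀ u, G1 u 0 = - u ^ 2) ∧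
      (∀ u, 0 < k u) ∧ (∀ u, k u ^ 2 = 1 + (u ^ 2) ^ 2) ∧
      (∀ u s, Y u s + u ^ 2 * e (Y u s) = k u * s) ∧
      (∀ u s, e (Y u s) - u ^ 2 * Y u s = k u * G u s) ∧
      (∀ u ∈ Icc (0:ℝ) 1, ∀ s, 0 ≤ s → Y u s ∈ Icc 0 (2 * s)) := by
  set k : ℝ → ℝ := fun u => Real.sqrt (1 + (u ^ 2) ^ 2) with hkdef
  have hkp : ∀ u, 0 < k u := fun u => Real.sqrt_pos.2 (by positivity)
  have hksq : ∀ u, k u ^ 2 = 1 + (u ^ 2) ^ 2 := fun u => Real.sq_sqrt (by positivity)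
  have hk2 : ∀ u ∈ Icc (0:ℝ) 1, k u ≤ 2 := by
    intro u hu
    have h1 : u ^ 2 ≤ 1 := pow_le_one₀ hu.1 hu.2
    have h2 : (u ^ 2) ^ 2 ≤ 1 := pow_le_one₀ (by positivity) h1
    have := hksq u
    nlinarith [hkp u]
  choose Y hYeq hYd hYneg hYpos hYle using fun u : ℝ =>
    exists_inv hed he1 he0 (u ^ 2) (k u) (by positivity) (hkp u)
  have hY0 : ∀ u, Y u 0 = 0 := fun u => by
    have h1 := hYneg u 0 le_rfl
    have h2 := hYeq u 0
    rw [he0 _ h1] at h2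
    simpa using h2
  have hYmem : ∀ u ∈ Icc (0:ℝ) 1, ∀ s, 0 ≤ s → Y u s ∈ Icc 0 (2 * s) := by
    intro u hu s hs
    refine ⟨?_, (hYle u s hs).trans (mul_le_mul_of_nonneg_right (hk2 u hu) hs)⟩
    rcases hs.eq_or_lt with rfl | h
    · rw [hY0]
    · exact (hYpos u s h).le
  have hden : ∀ u x, 0 < 1 + u ^ 2 * e1 x := fun u x => by
    have := mul_nonneg (sq_nonneg u) (he1 x); linarith
  set w : ℝ × ℝ → ℝ := fun p => k p.1 / (1 + p.1 ^ 2 * e1 p.2) with hw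
  have hws : ContDiff ℝ (⊤ : ℕ∞) w := by
    refine ContDiff.div ?_ ?_ (fun p => (hden p.1 p.2).ne')
    · refine ContDiff.sqrt (by fun_prop) (fun p => by positivity)
    · exact contDiff_const.add ((contDiff_fst.pow 2).mul (he1s.comp contDiff_snd))
  let D : ℕ → ℝ × ℝ → ℝ := fun j => Nat.rec (fun p => e2 p.2 * w p ^ 3)
    (fun _ φ p => fderiv ℝ φ p (0, 1) * w p) j
  have hD0 : ∀ p, D 0 p = e2 p.2 * w p ^ 3 := fun p => rfl
  have hDs : ∀ j p, D (j + 1) p = fderiv ℝ (D j) p (0, 1) * w p := fun j p => rfl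
  have hDc : ∀ j, ContDiff ℝ (⊤ : ℕ∞) (D j) := by
    intro j
    induction j with
    | zero => exact (he2s.comp contDiff_snd).mul (hws.pow 3)
    | succ j ih =>
      have h1 : ContDiff ℝ (⊤ : ℕ∞) (fderiv ℝ (D j)) := ih.fderiv_right (by simp)
      exact (h1.clm_apply contDiff_const).mul hws
  have hDd : ∀ j u x, HasDerivAt (fun x => D j (u, x)) (fderiv ℝ (D j) (u, x) (0, 1)) x := by
    intro j u x
    have h1 : HasFDerivAt (D j) (fderiv ℝ (D j) (u, x)) (u, x) :=
      ((hDc j).differentiable (by simp) _).hasFDerivAt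
    have h2 : HasDerivAt (fun x : ℝ => (u, x)) (0, 1) x :=
      (hasDerivAt_const x u).prodMk (hasDerivAt_id x)
    exact h1.comp_hasDerivAt x h2
  set H : ℝ → ℕ → ℝ → ℝ := fun u j s => D j (u, Y u s) with hH
  have hHd : ∀ u j s, HasDerivAt (H u j) (H u (j + 1) s) s := by
    intro u j s
    exact (hDd j u (Y u s)).comp s (hYd u s)
  have hHneg : ∀ u j, ∀ s ≤ 0, H u j s = 0 := by
    intro u j
    refine seq_zero (H u) (hHd u) ?_ j
    intro s hs
    simp only [hH, hD0, he20 _ (hYneg u s hs), zero_mul]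
  refine ⟨H, Y, fun u s => (e (Y u s) - u ^ 2 * Y u s) / k u,
    fun u s => (e1 (Y u s) - u ^ 2) / (1 + u ^ 2 * e1 (Y u s)), k, hHd, hHneg, ?_, ?_, ?_,
    ?_, ?_, ?_, ?_, hkp, hksq, hYeq, ?_, hYmem⟩
  · intro u hu s hs
    have h1 := hYpos u s hs.1
    have h2 := (hYmem u hu s hs.1.le).2
    have h3 := he2 (Y u s) ⟨h1, by linarith [hs.2]⟩
    simp only [hH, hD0]
    have : 0 < w (u, Y u s) := div_pos (hkp u) (hden _ _)
    positivity
  · intro j K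
    obtain ⟨C, hC⟩ := (isCompact_Icc.prod isCompact_Icc : IsCompact (Icc (0:ℝ) 1 ×ˢ Icc (0:ℝ) 1)).exists_bound_of_continuousOn
      (hDc (j + K)).continuous.continuousOn
    refine ⟨C, (norm_nonneg _).trans (hC (0, 0) (by simp)), ?_⟩
    intro u hu
    refine flat_pow (H u) (hHd u) (fun j => hHneg u j 0 le_rfl) (1 / 2) C K j ?_
    intro s hs
    have h1 := hYmem u hu s hs.1
    exact hC (u, Y u s) ⟨hu, h1.1, by linarith [h1.2, hs.2]⟩
  · intro s
    have h1 := hYeq 0 s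
    have hk0 : k 0 = 1 := by simp [hkdef]
    have h2 : Y 0 s = s := by rw [hk0] at h1; linarith
    simp [hH, hD0, h2, hw, hk0]
  · intro u s
    have h1 := (((hed (Y u s)).comp s (hYd u s)).sub ((hYd u s).const_mul (u ^ 2))).div_const (k u)
    refine h1.congr_deriv ?_
    have := (hkp u).ne'
    have := (hden u (Y u s)).ne'
    field_simp
  · intro u s
    have h0 := (he1d (Y u s)).comp s (hYd u s)
    have h1 := (h0.sub_const (u ^ 2)).div
      ((h0.const_mul (u ^ 2)).const_add 1) (hden u (Y u s)).ne'
    refine h1.congr_deriv ?_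
    simp only [hH, hD0, hw, Function.comp]
    have h3 := (hden u (Y u s)).ne'
    have h4 := hksq u
    rw [div_pow, pow_succ (k u) 2, h4]
    field_simp
    ring
  · intro u
    simp [hY0, he0 0 le_rfl]
  · intro u
    simp [hY0, he10 0 le_rfl]
  · intro u s
    have := (hkp u).ne'
    field_simp

lemma cutoff_bound (χ : ℝ → ℝ) (hχ : ContDiff ℝ (⊤ : ℕ∞) χ) (N : ℕ) :
    ∃ C : ℝ, 0 ≤ C ∧ ∀ a : ℕ → ℝ → ℝ, (∀ j x, HasDerivAt (a j) (a (j + 1) x) x) →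
      ∀ h A : ℝ, 0 < h → h ≤ 1 → (∀ j ≤ N, ∀ x ∈ Icc 0 h, |a j x| ≤ A) →
      ∀ i ≤ N, ∀ x ∈ Icc 0 h,
        |iteratedDeriv i (fun x => a 0 x * χ (x / h)) x| ≤ C * A / h ^ N := by
  have hb : ∀ j : ℕ, ∃ C : ℝ, ∀ x ∈ Icc (0:ℝ) 1, ‖iteratedDeriv j χ x‖ ≤ C := fun j =>
    isCompact_Icc.exists_bound_of_continuousOn
      (hχ.continuous_iteratedDeriv j (by exact_mod_cast le_top)).continuousOn
  choose B hB using hb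
  have hB0 : ∀ j, 0 ≤ B j := fun j => (norm_nonneg _).trans (hB j 0 (by simp))
  set S := ∑ j ∈ Finset.range (N + 1), B j with hS
  have hS0 : 0 ≤ S := Finset.sum_nonneg fun j _ => hB0 j
  have hBS : ∀ j ≤ N, B j ≤ S := fun j hj =>
    Finset.single_le_sum (fun i _ => hB0 i) (Finset.mem_range.2 (by omega))
  refine ⟨2 ^ N * S, by positivity, ?_⟩
  intro a ha h A hh hh1 hA i hi x hx
  obtain ⟨hac, hai⟩ := seq_contDiff a ha
  have hA0 : 0 ≤ A := (abs_nonneg _).trans (hA 0 (Nat.zero_le _) x hx)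
  have hχh : ContDiff ℝ (⊤ : ℕ∞) (fun x => χ (x / h)) := hχ.comp (by fun_prop)
  rw [iteratedDeriv_fun_mul ((hac.of_le (by exact_mod_cast le_top)).contDiffAt)
    ((hχh.of_le (by exact_mod_cast le_top)).contDiffAt)]
  have hterm : ∀ j, j ≤ i → |iteratedDeriv (i - j) (fun x => χ (x / h)) x| ≤ S / h ^ N := by
    intro j hj
    have e1 : (fun x => χ (x / h)) = fun x => χ (h⁻¹ * x) := by
      funext y; rw [div_eq_inv_mul]
    rw [e1, iteratedDeriv_comp_const_mul (contDiff_infty.1 hχ (i - j))]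
    simp only
    rw [abs_mul, abs_of_pos (by positivity)]
    have h1 : |iteratedDeriv (i - j) χ (h⁻¹ * x)| ≤ S := by
      refine (hB (i - j) _ ⟨by have := hx.1; positivity, ?_⟩).trans (hBS _ (by omega))
      rw [← div_eq_inv_mul, div_le_one hh]; exact hx.2
    have h2 : h⁻¹ ^ (i - j) ≤ h⁻¹ ^ N :=
      pow_le_pow_right₀ (one_le_inv_iff₀.2 ⟨hh, hh1⟩) (by omega)
    calc h⁻¹ ^ (i - j) * |iteratedDeriv (i - j) χ (h⁻¹ * x)| ≤ h⁻¹ ^ N * S :=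
          mul_le_mul h2 h1 (abs_nonneg _) (by positivity)
      _ = S / h ^ N := by rw [inv_pow, div_eq_inv_mul]
  refine (Finset.abs_sum_le_sum_abs _ _).trans ?_
  have : ∀ j ∈ Finset.range (i + 1), |(i.choose j : ℝ) * iteratedDeriv j (a 0) x *
      iteratedDeriv (i - j) (fun x => χ (x / h)) x| ≤ (i.choose j : ℝ) * (A * (S / h ^ N)) := by
    intro j hj
    have hj' : j ≤ i := by have := Finset.mem_range.1 hj; omega
    rw [abs_mul, abs_mul, mul_assoc, Nat.abs_cast, hai]
    refine mul_le_mul_of_nonneg_left ?_ (Nat.cast_nonneg _)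
    exact mul_le_mul (hA j (by omega) x hx) (hterm j hj') (abs_nonneg _) hA0
  refine (Finset.sum_le_sum this).trans ?_
  rw [← Finset.sum_mul]
  have hch : (∑ j ∈ Finset.range (i + 1), (i.choose j : ℝ)) = 2 ^ i := by
    exact_mod_cast Nat.sum_range_choose i
  rw [hch]
  have h2 : (2:ℝ) ^ i ≤ 2 ^ N := pow_le_pow_right₀ (by norm_num) hi
  calc (2:ℝ) ^ i * (A * (S / h ^ N)) ≤ 2 ^ N * (A * (S / h ^ N)) :=
        mul_le_mul_of_nonneg_right h2 (by positivity)
    _ = _ := by ring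

lemma core {τ : ℝ} (hτ : 0 < τ) {e e1 e2 : ℝ → ℝ}
    (hed : ∀ x, HasDerivAt e (e1 x) x) (he1d : ∀ x, HasDerivAt e1 (e2 x) x)
    (he0 : ∀ x ≤ 0, e x = 0) (he10 : ∀ x ≤ 0, e1 x = 0)
    {H : ℝ → ℕ → ℝ → ℝ} {G G1 : ℝ → ℝ → ℝ}
    (hHd : ∀ u j s, HasDerivAt (H u j) (H u (j + 1) s) s)
    (hHneg : ∀ u j, ∀ s ≤ 0, H u j s = 0)
    (hHpos : ∀ u ∈ Icc (0:ℝ) 1, ∀ s ∈ Ioo 0 (τ / 4), 0 < H u 0 s)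
    (hHb : ∀ j K : ℕ, ∃ C : ℝ, 0 ≤ C ∧ ∀ u ∈ Icc (0:ℝ) 1, ∀ s ∈ Icc (0:ℝ) (1 / 2),
        |H u j s| ≤ C * s ^ K)
    (hH0 : ∀ s, H 0 0 s = e2 s)
    (hGd : ∀ u s, HasDerivAt (G u) (G1 u s) s) (hG1d : ∀ u s, HasDerivAt (G1 u) (H u 0 s) s)
    (hG0 : ∀ u, G u 0 = 0) (hG10 : ∀ u, G1 u 0 = - u ^ 2)
    (N : ℕ) (ε : ℝ) (hε : 0 < ε) :
    ∃ h : ℝ, 0 < h ∧ h < ε ∧ h ≤ 1 / 2 ∧ ∃ F F1 P : ℝ → ℝ,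
      ContDiff ℝ (⊤ : ℕ∞) F ∧ ContDiff ℝ (⊤ : ℕ∞) P ∧
      (∀ x, HasDerivAt F (F1 x) x) ∧ (∀ x, HasDerivAt F1 (P x) x) ∧
      (∀ x ∈ Ioo 0 h, 0 < P x) ∧ (∀ x ≤ 0, P x = 0) ∧ (∀ x, h ≤ x → P x = 0) ∧
      (∀ i ≤ N, ∀ x ∈ Icc 0 h, |iteratedDeriv i P x| ≤ 1) ∧ F 0 = 0 ∧ F1 0 = 0 ∧
      (∀ x ∈ Icc 0 (h / 4), F x = e x) ∧
      ∃ u ∈ Icc (0:ℝ) 1, ∀ s ∈ Icc 0 (h / 4), F (h - s) = F h + G u s := by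
  -- the cutoffs
  set χ : ℝ → ℝ := fun t => Real.smoothTransition (3 - 4 * t) with hχ
  have hχs : ContDiff ℝ (⊤ : ℕ∞) χ := Real.smoothTransition.contDiff.comp (by fun_prop)
  have hχ0 : ∀ t, 3 / 4 ≤ t → χ t = 0 := fun t ht =>
    Real.smoothTransition.zero_of_nonpos (by linarith)
  have hχ1 : ∀ t, t ≤ 1 / 2 → χ t = 1 := fun t ht =>
    Real.smoothTransition.one_of_one_le (by linarith)
  have hχp : ∀ t, t < 3 / 4 → 0 < χ t := fun t ht =>
    Real.smoothTransition.pos_of_pos (by linarith)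
  have hχn : ∀ t, 0 ≤ χ t := fun t => Real.smoothTransition.nonneg _
  have hχle : ∀ t, χ t ≤ 1 := fun t => Real.smoothTransition.le_one _
  set b : ℝ → ℝ := fun t => Real.smoothTransition (4 * t - 1) * χ t with hb
  have hbs : ContDiff ℝ (⊤ : ℕ∞) b :=
    (Real.smoothTransition.contDiff.comp (by fun_prop)).mul hχs
  have hbn : ∀ t, 0 ≤ b t := fun t => mul_nonneg (Real.smoothTransition.nonneg _) (hχn t)
  have hb0 : ∀ t, t ≤ 1 / 4 → b t = 0 := fun t ht => by
    simp only [hb]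
    rw [Real.smoothTransition.zero_of_nonpos (by linarith), zero_mul]
  have hb1 : ∀ t, 3 / 4 ≤ t → b t = 0 := fun t ht => by
    simp only [hb]
    rw [hχ0 t ht, mul_zero]
  have hbh : b (1 / 2) = 1 := by
    simp only [hb]
    rw [hχ1 _ le_rfl, Real.smoothTransition.one_of_one_le (by norm_num), mul_one]
  obtain ⟨B, hBs, hBd, hB0⟩ := exists_antideriv b hbs
  have hBm : Monotone B := monotone_of_hasDerivAt_nonneg hBd hbn
  have hB1 : 0 < B 1 := by
    by_contra hcon
    push Not at hcon
    have hz : ∀ x ∈ Icc (0:ℝ) 1, B x = 0 := fun x hx =>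
      le_antisymm ((hBm hx.2).trans hcon) (hB0 ▸ hBm hx.1)
    have h1 : B =ᶠ[𝓝 (1 / 2)] fun _ => 0 := by
      filter_upwards [Icc_mem_nhds (show (0:ℝ) < 1 / 2 by norm_num)
        (show (1 / 2 : ℝ) < 1 by norm_num)] with x hx
      exact hz x hx
    have h2 := (hBd (1 / 2)).deriv
    rw [h1.deriv_eq, deriv_const, hbh] at h2
    norm_num at h2
  -- constants
  obtain ⟨C1, hC10, hC1⟩ := cutoff_bound χ hχs N
  obtain ⟨C2, hC20, hC2⟩ := cutoff_bound b hbs N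
  choose c0 hc00 hc0 using fun j => hHb j (2 * N + 2)
  set M := ∑ j ∈ Finset.range (N + 1), c0 j with hM
  have hM0 : 0 ≤ M := Finset.sum_nonneg fun j _ => hc00 j
  have hcM : ∀ j ≤ N, c0 j ≤ M := fun j hj =>
    Finset.single_le_sum (fun i _ => hc00 i) (Finset.mem_range.2 (by omega))
  set Q := 2 * M + 2 * (C1 * M) + 2 * C2 / B 1 + 1 with hQ
  have hQ1 : 1 ≤ Q := by
    have : 0 ≤ 2 * M + 2 * (C1 * M) + 2 * C2 / B 1 := by positivity
    linarith
  have hQ0 : 0 < Q := by linarith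
  obtain ⟨h, hh, hhε, hh2, hhτ, hhQ⟩ : ∃ h : ℝ, 0 < h ∧ h < ε ∧ h ≤ 1 / 2 ∧ h < τ / 4 ∧
      Q * h ≤ 1 := by
    refine ⟨min (min (ε / 2) (1 / 2)) (min (τ / 8) (1 / Q)), by positivity, ?_, ?_, ?_, ?_⟩
    · exact ((min_le_left _ _).trans (min_le_left _ _)).trans_lt (by linarith)
    · exact (min_le_left _ _).trans (min_le_right _ _)
    · exact ((min_le_right _ _).trans (min_le_left _ _)).trans_lt (by linarith)
    · have : min (min (ε / 2) (1 / 2)) (min (τ / 8) (1 / Q)) ≤ 1 / Q :=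
        (min_le_right _ _).trans (min_le_right _ _)
      calc Q * _ ≤ Q * (1 / Q) := mul_le_mul_of_nonneg_left this hQ0.le
        _ = 1 := by field_simp
  have hhle1 : h ≤ 1 := by linarith
  set u := h ^ (N + 1) with hu
  have huI : u ∈ Icc (0:ℝ) 1 := ⟨by positivity, pow_le_one₀ hh.le hhle1⟩
  have hu2 : u ^ 2 = h ^ (2 * N + 2) := by rw [hu, ← pow_mul]; congr 1; ring
  have h0I : (0:ℝ) ∈ Icc (0:ℝ) 1 := by simp
  have hHM : ∀ v ∈ Icc (0:ℝ) 1, ∀ j ≤ N, ∀ x ∈ Icc 0 h, |H v j x| ≤ M * h ^ (2 * N + 2) := by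
    intro v hv j hj x hx
    refine (hc0 j v hv x ⟨hx.1, hx.2.trans hh2⟩).trans ?_
    exact mul_le_mul (hcM j hj) (pow_le_pow_left₀ hx.1 hx.2 _) (pow_nonneg hx.1 _) hM0
  have hHs : ∀ v, ContDiff ℝ (⊤ : ℕ∞) (H v 0) := fun v => (seq_contDiff (H v) (hHd v)).1
  -- the pieces
  set q : ℝ → ℝ → ℝ := fun v x => H v 0 x * χ (x / h) with hq
  have hqs : ∀ v, ContDiff ℝ (⊤ : ℕ∞) (q v) := fun v =>
    (hHs v).mul (hχs.comp (by fun_prop))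
  have hqb : ∀ v ∈ Icc (0:ℝ) 1, ∀ i ≤ N, ∀ x ∈ Icc 0 h,
      |iteratedDeriv i (q v) x| ≤ C1 * (M * h ^ (2 * N + 2)) / h ^ N := fun v hv =>
    hC1 (H v) (hHd v) h _ hh hhle1 (hHM v hv)
  have hqb0 : ∀ v ∈ Icc (0:ℝ) 1, ∀ x ∈ Icc 0 h, |q v x| ≤ M * h ^ (2 * N + 2) := by
    intro v hv x hx
    simp only [hq]
    rw [abs_mul, abs_of_nonneg (hχn _)]
    have h1 := hHM v hv 0 (Nat.zero_le _) x hx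
    calc |H v 0 x| * χ (x / h) ≤ |H v 0 x| * 1 :=
          mul_le_mul_of_nonneg_left (hχle _) (abs_nonneg _)
      _ ≤ _ := by rw [mul_one]; exact h1
  have hbb : ∀ i ≤ N, ∀ x ∈ Icc 0 h, |iteratedDeriv i (fun x => b (x / h)) x| ≤ C2 / h ^ N := by
    intro i hi x hx
    have := hC2 (fun j _ => if j = 0 then 1 else 0) (by
      intro j y
      simpa using hasDerivAt_const y (if j = 0 then (1:ℝ) else 0)) h 1 hh hhle1 (by
      intro j _ y _
      split_ifs <;> simp) i hi x hx
    simpa using this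
  have hflip : ∀ x ∈ Icc 0 h, h - x ∈ Icc 0 h := fun x hx =>
    ⟨by linarith [hx.2], by linarith [hx.1]⟩
  set P0 : ℝ → ℝ := fun x => q 0 x + q u (h - x) with hP0
  have hqus : ContDiff ℝ (⊤ : ℕ∞) (fun x => q u (h - x)) := (hqs u).comp (by fun_prop)
  have hP0s : ContDiff ℝ (⊤ : ℕ∞) P0 := (hqs 0).add hqus
  obtain ⟨Q0, hQ0s, hQ0d, hQ00⟩ := exists_antideriv P0 hP0s
  have hQ0h : |Q0 h| ≤ u ^ 2 := by
    have h2 := Convex.norm_image_sub_le_of_norm_hasDerivWithin_le (f := Q0) (f' := P0)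
      (s := Icc 0 h) (C := 2 * (M * h ^ (2 * N + 2))) (x := 0) (y := h)
      (fun x _ => (hQ0d x).hasDerivWithinAt)
      (fun x hx => by
        have e1 := hqb0 0 h0I x hx
        have e2 := hqb0 u huI (h - x) (hflip x hx)
        have e3 := abs_add_le (q 0 x) (q u (h - x))
        simp only [hP0, Real.norm_eq_abs]
        linarith)
      (convex_Icc _ _) ⟨le_rfl, hh.le⟩ ⟨hh.le, le_rfl⟩
    rw [hQ00, sub_zero, sub_zero, Real.norm_eq_abs, Real.norm_eq_abs, abs_of_pos hh] at h2
    refine h2.trans ?_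
    rw [hu2]
    have : 2 * M * h ≤ 1 := by
      refine le_trans (mul_le_mul_of_nonneg_right ?_ hh.le) hhQ
      have : 0 ≤ 2 * (C1 * M) + 2 * C2 / B 1 + 1 := by positivity
      linarith
    calc 2 * (M * h ^ (2 * N + 2)) * h = (2 * M * h) * h ^ (2 * N + 2) := by ring
      _ ≤ 1 * h ^ (2 * N + 2) := mul_le_mul_of_nonneg_right this (by positivity)
      _ = _ := one_mul _
  set c := (u ^ 2 - Q0 h) / (h * B 1) with hc
  have hcn : 0 ≤ c := div_nonneg (by linarith [le_abs_self (Q0 h)]) (by positivity)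
  have hcle : c ≤ 2 * u ^ 2 / (h * B 1) := by
    refine div_le_div_of_nonneg_right ?_ (by positivity)
    linarith [neg_abs_le (Q0 h)]
  set P : ℝ → ℝ := fun x => P0 x + c * b (x / h) with hP
  have hbhs : ContDiff ℝ (⊤ : ℕ∞) (fun x => b (x / h)) := hbs.comp (by fun_prop)
  have hPs : ContDiff ℝ (⊤ : ℕ∞) P := hP0s.add (contDiff_const.mul hbhs)
  set F1 : ℝ → ℝ := fun x => Q0 x + c * h * B (x / h) with hF1
  have hF1d : ∀ x, HasDerivAt F1 (P x) x := by
    intro x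
    have h1 : HasDerivAt (fun x => B (x / h)) (b (x / h) * (1 / h)) x :=
      (hBd (x / h)).comp x ((hasDerivAt_id x).div_const h)
    refine ((hQ0d x).add (h1.const_mul (c * h))).congr_deriv ?_
    simp only [hP]
    field_simp
  have hF1s : ContDiff ℝ (⊤ : ℕ∞) F1 :=
    hQ0s.add (contDiff_const.mul (hBs.comp (by fun_prop)))
  have hF10 : F1 0 = 0 := by simp [hF1, hQ00, hB0]
  have hF1h : F1 h = u ^ 2 := by
    simp only [hF1, hc]
    rw [div_self hh.ne']
    field_simp
    ring
  obtain ⟨F, hFs, hFd, hF0⟩ := exists_antideriv F1 hF1s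
  have hqn : ∀ v ∈ Icc (0:ℝ) 1, ∀ x, x ≤ h → 0 ≤ q v x := by
    intro v hv x hx
    rcases le_or_gt x 0 with h0 | h0
    · simp [hq, hHneg v 0 x h0]
    · exact mul_nonneg (hHpos v hv x ⟨h0, by linarith⟩).le (hχn _)
  have hqp : ∀ v ∈ Icc (0:ℝ) 1, ∀ x, 0 < x → x < 3 / 4 * h → 0 < q v x := by
    intro v hv x h0 hx
    refine mul_pos (hHpos v hv x ⟨h0, by linarith⟩) (hχp _ ?_)
    rwa [div_lt_iff₀ hh]
  have hqz : ∀ v x, x ≤ 0 → q v x = 0 := fun v x hx => by simp [hq, hHneg v 0 x hx]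
  have hqz' : ∀ v x, 3 / 4 * h ≤ x → q v x = 0 := fun v x hx => by
    simp only [hq]
    rw [hχ0 _ (by rwa [le_div_iff₀ hh]), mul_zero]
  have hqe : ∀ v x, x ≤ 1 / 2 * h → q v x = H v 0 x := fun v x hx => by
    simp only [hq]
    rw [hχ1 _ (by rwa [div_le_iff₀ hh]), mul_one]
  have hbz : ∀ x, x ≤ 1 / 4 * h → b (x / h) = 0 := fun x hx => hb0 _ (by rwa [div_le_iff₀ hh])
  have hbz' : ∀ x, 3 / 4 * h ≤ x → b (x / h) = 0 := fun x hx =>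
    hb1 _ (by rwa [le_div_iff₀ hh])
  refine ⟨h, hh, hhε, hh2, F, F1, P, hFs, hPs, hFd, hF1d, ?_, ?_, ?_, ?_, hF0, hF10, ?_,
    u, huI, ?_⟩
  · intro x hx
    have t1 := hqn 0 h0I x hx.2.le
    have t2 := hqn u huI (h - x) (by linarith [hx.1])
    have t3 := mul_nonneg hcn (hbn (x / h))
    simp only [hP, hP0]
    by_cases hx3 : x < 3 / 4 * h
    · have := hqp 0 h0I x hx.1 hx3
      linarith
    · have := hqp u huI (h - x) (by linarith [hx.2]) (by linarith)
      linarith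
  · intro x hx
    simp only [hP, hP0]
    rw [hqz 0 x hx, hqz' u (h - x) (by linarith), hbz x (by linarith)]
    ring
  · intro x hx
    simp only [hP, hP0]
    rw [hqz' 0 x (by linarith), hqz u (h - x) (by linarith), hbz' x (by linarith)]
    ring
  · intro i hi x hx
    have d1 : ContDiffAt ℝ i (q 0) x := ((hqs 0).of_le (by exact_mod_cast le_top)).contDiffAt
    have d2 : ContDiffAt ℝ i (fun x => q u (h - x)) x :=
      (hqus.of_le (by exact_mod_cast le_top)).contDiffAt
    have d3 : ContDiffAt ℝ i (fun x => b (x / h)) x :=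
      (hbhs.of_le (by exact_mod_cast le_top)).contDiffAt
    have d4 : ContDiffAt ℝ i (fun x => c * b (x / h)) x := contDiffAt_const.mul d3
    have eq : iteratedDeriv i P x = iteratedDeriv i (q 0) x +
        (-1 : ℝ) ^ i * iteratedDeriv i (q u) (h - x) +
        c * iteratedDeriv i (fun x => b (x / h)) x := by
      simp only [hP, hP0]
      rw [iteratedDeriv_fun_add (d1.add d2) d4, iteratedDeriv_fun_add d1 d2,
        iteratedDeriv_comp_const_sub, iteratedDeriv_const_mul_field]
      simp only [smul_eq_mul]
    rw [eq]
    have b1 := hqb 0 h0I i hi x hx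
    have b2 := hqb u huI i hi (h - x) (hflip x hx)
    have b3 := hbb i hi x hx
    have b2' : |(-1 : ℝ) ^ i * iteratedDeriv i (q u) (h - x)| ≤
        C1 * (M * h ^ (2 * N + 2)) / h ^ N := by
      rw [abs_mul, abs_pow, abs_neg, abs_one, one_pow, one_mul]
      exact b2
    have b3' : |c * iteratedDeriv i (fun x => b (x / h)) x| ≤
        2 * u ^ 2 / (h * B 1) * (C2 / h ^ N) := by
      rw [abs_mul, abs_of_nonneg hcn]
      exact mul_le_mul hcle b3 (abs_nonneg _) (by positivity)
    have s1 : C1 * (M * h ^ (2 * N + 2)) / h ^ N ≤ C1 * M * h := by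
      rw [div_le_iff₀ (by positivity)]
      have : h ^ (2 * N + 2) ≤ h * h ^ N := by
        rw [← pow_succ']
        exact pow_le_pow_of_le_one hh.le hhle1 (by omega)
      calc C1 * (M * h ^ (2 * N + 2)) = C1 * M * h ^ (2 * N + 2) := by ring
        _ ≤ C1 * M * (h * h ^ N) := mul_le_mul_of_nonneg_left this (by positivity)
        _ = _ := by ring
    have s2 : 2 * u ^ 2 / (h * B 1) * (C2 / h ^ N) ≤ 2 * C2 / B 1 * h := by
      rw [hu2]
      have : h ^ (2 * N + 2) ≤ h * (h * h ^ N) := by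
        rw [← pow_succ', ← pow_succ']
        exact pow_le_pow_of_le_one hh.le hhle1 (by omega)
      calc 2 * h ^ (2 * N + 2) / (h * B 1) * (C2 / h ^ N)
          = 2 * C2 / (B 1 * (h * h ^ N)) * h ^ (2 * N + 2) := by field_simp
        _ ≤ 2 * C2 / (B 1 * (h * h ^ N)) * (h * (h * h ^ N)) :=
            mul_le_mul_of_nonneg_left this (by positivity)
        _ = _ := by field_simp
    have a1 := abs_add_le (iteratedDeriv i (q 0) x + (-1 : ℝ) ^ i * iteratedDeriv i (q u) (h - x))
      (c * iteratedDeriv i (fun x => b (x / h)) x)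
    have a2 := abs_add_le (iteratedDeriv i (q 0) x) ((-1 : ℝ) ^ i * iteratedDeriv i (q u) (h - x))
    have hQh : Q * h = 2 * M * h + 2 * (C1 * M) * h + 2 * C2 / B 1 * h + h := by
      rw [hQ]; ring
    have : 0 ≤ 2 * M * h := by positivity
    linarith
  · have hz1 : ∀ x ∈ Icc 0 (h / 4), F1 x - e1 x = 0 := by
      refine eq_zero_of_deriv (x0 := 0) (φ' := fun x => P x - e2 x)
        (fun x _ => (hF1d x).sub (he1d x)) ?_ ⟨le_rfl, by linarith⟩ (by rw [hF10, he10 0 le_rfl, sub_zero])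
      intro x hx
      simp only [hP, hP0]
      rw [hqe 0 x (by linarith [hx.2]), hqz' u (h - x) (by linarith [hx.2]),
        hbz x (by linarith [hx.2]), hH0]
      ring
    have hz2 : ∀ x ∈ Icc 0 (h / 4), F x - e x = 0 :=
      eq_zero_of_deriv (x0 := 0) (fun x _ => (hFd x).sub (hed x)) hz1 ⟨le_rfl, by linarith⟩
        (by rw [hF0, he0 0 le_rfl, sub_zero])
    exact fun x hx => sub_eq_zero.1 (hz2 x hx)
  · have hsub : ∀ s : ℝ, HasDerivAt (fun s => h - s) (-1) s := fun s => by
      simpa using (hasDerivAt_id s).const_sub h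
    have hz1 : ∀ s ∈ Icc 0 (h / 4), F1 (h - s) * (-1) - G1 u s = 0 := by
      refine eq_zero_of_deriv (x0 := 0) (φ' := fun s => P (h - s) * (-1) * (-1) - H u 0 s)
        (fun s _ => (((hF1d (h - s)).comp s (hsub s)).mul_const (-1)).sub (hG1d u s)) ?_
        ⟨le_rfl, by linarith⟩ (by rw [sub_zero, hF1h, hG10]; ring)
      intro s hs
      simp only [hP, hP0]
      rw [hqz' 0 (h - s) (by linarith [hs.2]), sub_sub_cancel, hqe u s (by linarith [hs.2]),
        hbz' (h - s) (by linarith [hs.2])]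
      ring
    have hz2 : ∀ s ∈ Icc 0 (h / 4), F (h - s) - F h - G u s = 0 :=
      eq_zero_of_deriv (x0 := 0)
        (fun s _ => (((hFd (h - s)).comp s (hsub s)).sub_const (F h)).sub (hGd u s)) hz1
        ⟨le_rfl, by linarith⟩ (by rw [sub_zero, hG0]; ring)
    intro s hs
    have := hz2 s hs
    linarith

lemma pt2_zero (x y : ℝ) : pt2 x y 0 = x := rfl
lemma pt2_one (x y : ℝ) : pt2 x y 1 = y := rfl

lemma dist_pt2 (p q : EuclideanSpace ℝ (Fin 2)) :
    dist p q = Real.sqrt ((p 0 - q 0) ^ 2 + (p 1 - q 1) ^ 2) := by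
  rw [EuclideanSpace.dist_eq, Fin.sum_univ_two, Real.dist_eq, Real.dist_eq, sq_abs, sq_abs]

lemma norm_pt2 (p : EuclideanSpace ℝ (Fin 2)) :
    ‖p‖ = Real.sqrt (p 0 ^ 2 + p 1 ^ 2) := by
  rw [EuclideanSpace.norm_eq, Fin.sum_univ_two, Real.norm_eq_abs, Real.norm_eq_abs, sq_abs, sq_abs]

lemma exists_hinge (h y γ : ℝ) (hh : 0 < h) (hy : |y| ≤ h) (hγ : 0 < γ) (hγ2 : γ < Real.pi / 2) :
    ∃ (p : EuclideanSpace ℝ (Fin 2)) (l : ℝ), 0 < l ∧ l ≤ 2 * h ∧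
      dist (pt2 0 0) p = l ∧ dist (pt2 h y) p = l ∧
      InnerProductGeometry.angle (pt2 0 0 - p) (pt2 h y - p) = Real.pi - γ := by
  set κ := Real.tan (γ / 2) with hκ
  have hcos : 1 / 2 ≤ Real.cos (γ / 2) := by
    rw [← Real.cos_pi_div_three]
    apply Real.cos_le_cos_of_nonneg_of_le_pi <;> linarith [Real.pi_pos]
  have hcos0 : 0 < Real.cos (γ / 2) := by linarith
  have hκc : (1 + κ ^ 2) * Real.cos (γ / 2) ^ 2 = 1 := by
    rw [hκ, Real.tan_eq_sin_div_cos]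
    field_simp
    linarith [Real.sin_sq_add_cos_sq (γ / 2)]
  have hκ4 : 1 + κ ^ 2 ≤ 4 := by
    have h1 : 1 / 4 ≤ Real.cos (γ / 2) ^ 2 := by nlinarith
    nlinarith [sq_nonneg κ]
  have hcosγ : Real.cos γ * (1 + κ ^ 2) = 1 - κ ^ 2 := by
    have h1 : Real.cos γ = 2 * Real.cos (γ / 2) ^ 2 - 1 := by
      rw [← Real.cos_two_mul]; congr 1; ring
    rw [h1]
    linear_combination 2 * hκc
  have hy2 : y ^ 2 ≤ h ^ 2 := by
    rw [← sq_abs y]; exact pow_le_pow_left₀ (abs_nonneg _) hy 2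
  set l2 := (h ^ 2 + y ^ 2) * (1 + κ ^ 2) / 4 with hl2
  have hl2p : 0 < l2 := by positivity
  set p := pt2 (h / 2 - κ * y / 2) (y / 2 + κ * h / 2) with hp
  have hn1 : ‖pt2 0 0 - p‖ = Real.sqrt l2 := by
    rw [norm_pt2]
    congr 1
    simp only [PiLp.sub_apply, hp, pt2_zero, pt2_one, hl2]
    ring
  have hn2 : ‖pt2 h y - p‖ = Real.sqrt l2 := by
    rw [norm_pt2]
    congr 1
    simp only [PiLp.sub_apply, hp, pt2_zero, pt2_one, hl2]
    ring
  refine ⟨p, Real.sqrt l2, Real.sqrt_pos.2 hl2p, ?_, ?_, ?_, ?_⟩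
  · rw [Real.sqrt_le_left (by positivity)]
    have : (h ^ 2 + y ^ 2) * (1 + κ ^ 2) ≤ (2 * h ^ 2) * 4 :=
      mul_le_mul (by linarith) hκ4 (by positivity) (by positivity)
    rw [hl2]
    nlinarith [sq_nonneg h]
  · rw [dist_eq_norm, hn1]
  · rw [dist_eq_norm, hn2]
  · rw [InnerProductGeometry.angle, hn1, hn2, Real.mul_self_sqrt hl2p.le]
    have hin : inner ℝ (pt2 0 0 - p) (pt2 h y - p) = (κ ^ 2 - 1) * (h ^ 2 + y ^ 2) / 4 := by
      rw [PiLp.inner_apply, Fin.sum_univ_two]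
      simp only [PiLp.sub_apply, hp, pt2_zero, pt2_one, RCLike.inner_apply, conj_trivial]
      ring
    rw [hin]
    have : (κ ^ 2 - 1) * (h ^ 2 + y ^ 2) / 4 / l2 = Real.cos (Real.pi - γ) := by
      rw [Real.cos_pi_sub, div_eq_iff hl2p.ne', hl2]
      linear_combination (h ^ 2 + y ^ 2) / 4 * hcosγ
    rw [this, Real.arccos_cos (by linarith) (by linarith)]

def reflIso (c s b0 b1 : ℝ) (hcs : c ^ 2 + s ^ 2 = 1) :
    EuclideanSpace ℝ (Fin 2) ≃ᵢ EuclideanSpace ℝ (Fin 2) where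
  toFun p := pt2 (-c * (p 0 - b0) - s * (p 1 - b1)) (-s * (p 0 - b0) + c * (p 1 - b1))
  invFun q := pt2 (b0 - c * q 0 - s * q 1) (b1 - s * q 0 + c * q 1)
  left_inv p := by
    ext i
    fin_cases i
    · simp only [Fin.zero_eta, pt2_zero, pt2_one]
      linear_combination (p 0 - b0) * hcs
    · simp only [Fin.mk_one, pt2_zero, pt2_one]
      linear_combination (p 1 - b1) * hcs
  right_inv p := by
    ext i
    fin_cases i
    · simp only [Fin.zero_eta, pt2_zero, pt2_one]
      linear_combination (p 0) * hcs
    · simp only [Fin.mk_one, pt2_zero, pt2_one]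
      linear_combination (p 1) * hcs
  isometry_toFun := by
    refine Isometry.of_dist_eq fun p q => ?_
    rw [dist_pt2, dist_pt2]
    simp only [pt2_zero, pt2_one]
    congr 1
    linear_combination ((p 0 - q 0) ^ 2 + (p 1 - q 1) ^ 2) * hcs

lemma single (τ : ℝ) (hτ : 0 < τ)
    (f : ℝ → ℝ) (hfsm : ContDiffOn ℝ (⊤ : ℕ∞) f (Set.Icc 0 τ))
    (hfpl : Pliable 0 τ 0 f)
    (hf' : ∀ x ∈ Set.Ioc 0 τ, 0 < derivWithin f (Set.Icc 0 τ) x)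
    (hf'' : ∀ x ∈ Set.Ioc 0 τ, 0 < iteratedDerivWithin 2 f (Set.Icc 0 τ) x)
    (N : ℕ) (ε : ℝ) (hε : 0 < ε) :
    ∃ (h : ℝ) (F : ℝ → ℝ), 0 < h ∧ h < ε ∧ F 0 = 0 ∧ |F h| ≤ h ∧
      (ContDiffOn ℝ (⊤ : ℕ∞) F (Icc 0 h) ∧ ConvexOn ℝ (Icc 0 h) F) ∧
      (∀ s : ℕ, 2 ≤ s → iteratedDerivWithin s F (Icc 0 h) 0 = 0 ∧
        iteratedDerivWithin s F (Icc 0 h) h = 0) ∧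
      (∃ (ι₁ ι₂ : EuclideanSpace ℝ (Fin 2) ≃ᵢ EuclideanSpace ℝ (Fin 2))
          (δ₁ δ₂ : ℝ), 0 < δ₁ ∧ 0 < δ₂ ∧
        ι₁ '' ((fun x => pt2 x (F x)) '' Set.Icc 0 (0 + δ₁)) ⊆
          (fun x => pt2 x (f x)) '' Set.Icc 0 τ ∧
        ι₂ '' ((fun x => pt2 x (F x)) '' Set.Icc (h - δ₂) h) ⊆
          (fun x => pt2 x (f x)) '' Set.Icc 0 τ) ∧
      (∀ x ∈ Ioo 0 h, 0 < iteratedDerivWithin 2 F (Icc 0 h) x) ∧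
      (∀ s ≤ N, CrNorm s F (Icc 0 h) ≤ s + 1) := by
  have hflat := flat_of_bound hτ hfsm (pliable_bound hτ hfpl)
  obtain ⟨e, e1, e2, he1s, he2s, hed, he1d, he1, he0, he10, he20, he2, hef⟩ :=
    exists_ext hτ hfsm hflat hf' hf''
  obtain ⟨H, Y, G, G1, k, hHd, hHneg, hHpos, hHb, hH0, hGd, hG1d, hG0, hG10, hkp, hksq, hYeq,
    hYG, hYmem⟩ := exists_family he1s he2s hed he1d he1 he0 he10 he20 he2
  obtain ⟨h, hh, hhε, hh2, F, F1, P, hFs, hPs, hFd, hF1d, hPpos, hPneg, hPbig, hPb, hF0, hF10,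
    hFl, u, huI, hFr⟩ := core hτ hed he1d he0 he10 hHd hHneg hHpos hHb hH0 hGd hG1d hG0 hG10 N
      (min ε τ) (lt_min hε hτ)
  have hhτ : h < τ := hhε.trans_le (min_le_right _ _)
  have hdF : deriv F = F1 := funext fun x => (hFd x).deriv
  have hdF1 : deriv F1 = P := funext fun x => (hF1d x).deriv
  have hit : ∀ j, iteratedDeriv (j + 2) F = iteratedDeriv j P := fun j => by
    rw [iteratedDeriv_succ', hdF, iteratedDeriv_succ', hdF1]
  have hw : ∀ i, ∀ x ∈ Icc 0 h, iteratedDerivWithin i F (Icc 0 h) x = iteratedDeriv i F x :=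
    fun i x hx => iteratedDerivWithin_eq_iteratedDeriv (uniqueDiffOn_Icc hh)
      (contDiff_infty.1 hFs i).contDiffAt hx
  have hPn : ∀ x, 0 ≤ P x := by
    intro x
    rcases le_or_gt x 0 with h1 | h1
    · rw [hPneg x h1]
    rcases le_or_gt h x with h2 | h2
    · rw [hPbig x h2]
    exact (hPpos x ⟨h1, h2⟩).le
  have hseq : ∀ R : ℝ → ℝ, ContDiff ℝ (⊤ : ℕ∞) R → (∀ x ≤ 0, R x = 0) →
      ∀ j, iteratedDeriv j R 0 = 0 := by
    intro R hR h0 j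
    refine seq_zero (fun j => iteratedDeriv j R) ?_ (by simpa using h0) j 0 le_rfl
    intro j x
    rw [iteratedDeriv_succ]
    exact (hR.differentiable_iteratedDeriv j (by exact_mod_cast ENat.natCast_lt_top j) x).hasDerivAt
  have hF1b : ∀ x ∈ Icc 0 h, |F1 x| ≤ 1 := by
    intro x hx
    have h2 := Convex.norm_image_sub_le_of_norm_hasDerivWithin_le (f := F1) (f' := P)
      (s := Icc 0 h) (C := 1) (x := 0) (y := x)
      (fun x _ => (hF1d x).hasDerivWithinAt)
      (fun x hx => by simpa using hPb 0 (Nat.zero_le _) x hx)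
      (convex_Icc _ _) ⟨le_rfl, hh.le⟩ hx
    rw [hF10, sub_zero, sub_zero, one_mul, Real.norm_eq_abs, Real.norm_eq_abs,
      abs_of_nonneg hx.1] at h2
    linarith [hx.2]
  have hFb : ∀ x ∈ Icc 0 h, |F x| ≤ x := by
    intro x hx
    have h2 := Convex.norm_image_sub_le_of_norm_hasDerivWithin_le (f := F) (f' := F1)
      (s := Icc 0 h) (C := 1) (x := 0) (y := x)
      (fun x _ => (hFd x).hasDerivWithinAt) hF1b
      (convex_Icc _ _) ⟨le_rfl, hh.le⟩ hx
    rw [hF0, sub_zero, sub_zero, one_mul, Real.norm_eq_abs, Real.norm_eq_abs,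
      abs_of_nonneg hx.1] at h2
    exact h2
  have hhI : h ∈ Icc 0 h := ⟨hh.le, le_rfl⟩
  have h0I : (0:ℝ) ∈ Icc 0 h := ⟨le_rfl, hh.le⟩
  refine ⟨h, F, hh, hhε.trans_le (min_le_left _ _), hF0, hFb h hhI, ⟨hFs.contDiffOn, ?_⟩, ?_,
    ?_, ?_, ?_⟩
  · refine convexOn_of_deriv2_nonneg' (convex_Icc _ _)
      (fun x _ => (hFd x).differentiableAt.differentiableWithinAt) ?_ ?_
    · rw [hdF]
      exact fun x _ => (hF1d x).differentiableAt.differentiableWithinAt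
    · intro x _
      simp only [Function.iterate_succ, Function.iterate_zero, Function.comp, id, hdF, hdF1]
      exact hPn x
  · intro s hs
    obtain ⟨j, rfl⟩ := Nat.exists_eq_add_of_le' hs
    rw [hw _ 0 h0I, hw _ h hhI, hit]
    refine ⟨hseq P hPs hPneg j, ?_⟩
    have h1 := hseq (fun x => P (h - x)) (hPs.comp (by fun_prop))
      (fun x hx => hPbig _ (by linarith)) j
    rw [iteratedDeriv_comp_const_sub] at h1
    simpa using h1
  · have hk := (hkp u).ne'
    have hcs : (1 / k u) ^ 2 + (u ^ 2 / k u) ^ 2 = 1 := by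
      field_simp
      rw [hksq]; ring
    refine ⟨IsometryEquiv.refl _, reflIso (1 / k u) (u ^ 2 / k u) h (F h) hcs, h / 4, h / 4,
      by linarith, by linarith, ?_, ?_⟩
    · rintro _ ⟨_, ⟨x, hx, rfl⟩, rfl⟩
      rw [zero_add] at hx
      refine ⟨x, ⟨hx.1, by linarith [hx.2]⟩, ?_⟩
      change pt2 x (f x) = pt2 x (F x)
      rw [hFl x hx, hef x ⟨hx.1, by linarith [hx.2]⟩]
    · rintro _ ⟨_, ⟨x, hx, rfl⟩, rfl⟩
      set s := h - x with hs
      have hsI : s ∈ Icc 0 (h / 4) := ⟨by linarith [hx.2], by linarith [hx.1]⟩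
      have hxs : x = h - s := by rw [hs]; ring
      have hYm := hYmem u huI s hsI.1
      refine ⟨Y u s, ⟨hYm.1, by linarith [hYm.2, hsI.2]⟩, ?_⟩
      have h1 := hFr s hsI
      simp only
      rw [← hef (Y u s) ⟨hYm.1, by linarith [hYm.2, hsI.2]⟩, hxs, h1]
      have a1 := hYeq u s
      have a2 := hYG u s
      have a3 := hksq u
      change _ = pt2 (-(1 / k u) * ((h - s) - h) - (u ^ 2 / k u) * (F h + G u s - F h))
        (-(u ^ 2 / k u) * ((h - s) - h) + (1 / k u) * (F h + G u s - F h))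
      congr 1
      · field_simp
        apply mul_left_cancel₀ hk
        linear_combination (Y u s) * a3 + a1 - u ^ 2 * a2
      · field_simp
        apply mul_left_cancel₀ hk
        linear_combination (e (Y u s)) * a3 + u ^ 2 * a1 + a2
  · intro x hx
    rw [hw 2 x ⟨hx.1.le, hx.2.le⟩, hit 0, iteratedDeriv_zero]
    exact hPpos x hx
  · intro s hs
    have hone : ∀ i ∈ Finset.range (s + 1),
        (⨆ x : Icc 0 h, |iteratedDerivWithin i F (Icc 0 h) (x : ℝ)|) ≤ 1 := by
      intro i hi
      have hi' : i ≤ N := by have := Finset.mem_range.1 hi; omega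
      haveI : Nonempty (Icc 0 h) := ⟨⟨0, h0I⟩⟩
      refine ciSup_le fun x => ?_
      rw [hw i x x.2]
      match i, hi' with
      | 0, _ =>
        rw [iteratedDeriv_zero]
        exact (hFb x x.2).trans (by linarith [x.2.2])
      | 1, _ =>
        rw [iteratedDeriv_one, hdF]
        exact hF1b x x.2
      | j + 2, hj =>
        rw [hit]
        exact hPb j (by omega) x x.2
    refine (Finset.sum_le_sum hone).trans ?_
    simp

open Real InnerProductGeometry in
/-- Lemma 4.3 of the paper (smoothing a hinge). Given `f ∈ C^∞([0,τ])`
pliable at `0` with `f' > 0` and `f'' > 0` on `(0,τ]`, there are `n ≥ 2` and sequences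
`(l_m, r_m, α_m)_{m ≥ 1}` (indexed here by `m : ℕ` standing for `m + 1`), together with
convex `C^∞` functions `F_m` on intervals `[aJ_m, bJ_m]` whose graphs are convex
smoothings of `(l_m, r_m, α_m)`-hinges (joining the endpoints of the hinge and
infinitely flat at the endpoints), modelled on `f` near the endpoints, with positive
curvature except at the endpoints, with all `C^r` norms bounded uniformly in `m`, and
with `Σ 2^m (l_m + r_m) < ∞` and `Σ 2^m (π - α_m) = π / n`. -/
theorem stmt15 (τ : ℝ) (hτ : 0 < τ)
    (f : ℝ → ℝ) (hfsm : ContDiffOn ℝ (⊤ : ℕ∞) f (Set.Icc 0 τ))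
    (hfpl : Pliable 0 τ 0 f)
    (hf' : ∀ x ∈ Set.Ioc 0 τ, 0 < derivWithin f (Set.Icc 0 τ) x)
    (hf'' : ∀ x ∈ Set.Ioc 0 τ, 0 < iteratedDerivWithin 2 f (Set.Icc 0 τ) x) :
    ∃ n : ℕ, 2 ≤ n ∧
    ∃ (l r α aJ bJ : ℕ → ℝ) (F : ℕ → ℝ → ℝ),
      (∀ m : ℕ, 0 < l m ∧ 0 < r m ∧ α m ∈ Set.Ioo 0 π ∧ aJ m < bJ m) ∧
      -- each smoothing is the graph of a convex C^∞ function
      (∀ m : ℕ, ContDiffOn ℝ (⊤ : ℕ∞) (F m) (Set.Icc (aJ m) (bJ m)) ∧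
        ConvexOn ℝ (Set.Icc (aJ m) (bJ m)) (F m)) ∧
      -- the endpoints of the graph of F m are those of an (l m, r m, α m)-hinge
      (∀ m : ℕ, ∃ p : EuclideanSpace ℝ (Fin 2),
        dist (pt2 (aJ m) (F m (aJ m))) p = l m ∧
        dist (pt2 (bJ m) (F m (bJ m))) p = r m ∧
        angle (pt2 (aJ m) (F m (aJ m)) - p) (pt2 (bJ m) (F m (bJ m)) - p) = α m) ∧
      -- infinitely flat at the endpoints (a convex smoothing)
      (∀ m : ℕ, ∀ s : ℕ, 2 ≤ s →
        iteratedDerivWithin s (F m) (Set.Icc (aJ m) (bJ m)) (aJ m) = 0 ∧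
        iteratedDerivWithin s (F m) (Set.Icc (aJ m) (bJ m)) (bJ m) = 0) ∧
      -- modelled on f near the endpoints, via rigid motions of the plane
      (∀ m : ℕ, ∃ (ι₁ ι₂ : EuclideanSpace ℝ (Fin 2) ≃ᵢ EuclideanSpace ℝ (Fin 2))
          (δ₁ δ₂ : ℝ), 0 < δ₁ ∧ 0 < δ₂ ∧
        ι₁ '' ((fun x => pt2 x (F m x)) '' Set.Icc (aJ m) (aJ m + δ₁)) ⊆
          (fun x => pt2 x (f x)) '' Set.Icc 0 τ ∧
        ι₂ '' ((fun x => pt2 x (F m x)) '' Set.Icc (bJ m - δ₂) (bJ m)) ⊆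
          (fun x => pt2 x (f x)) '' Set.Icc 0 τ) ∧
      -- positive curvature except at the endpoints
      (∀ m : ℕ,
        (∀ x ∈ Set.Ioo (aJ m) (bJ m),
          0 < iteratedDerivWithin 2 (F m) (Set.Icc (aJ m) (bJ m)) x) ∧
        iteratedDerivWithin 2 (F m) (Set.Icc (aJ m) (bJ m)) (aJ m) = 0 ∧
        iteratedDerivWithin 2 (F m) (Set.Icc (aJ m) (bJ m)) (bJ m) = 0) ∧
      -- uniformly bounded C^r norms
      (∀ s : ℕ, ∃ M : ℝ, ∀ m : ℕ, CrNorm s (F m) (Set.Icc (aJ m) (bJ m)) ≤ M) ∧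
      -- the series conditions
      Summable (fun m : ℕ => (2 : ℝ) ^ (m + 1) * (l m + r m)) ∧
      HasSum (fun m : ℕ => (2 : ℝ) ^ (m + 1) * (π - α m)) (π / n) := by
  have H : ∀ m : ℕ, _ := fun m => single τ hτ f hfsm hfpl hf' hf'' m ((1 / 4) ^ (m + 1)) (by positivity)
  choose h F hh hhε hF0 hFh hF hflat hmod hpos hnorm using H
  have hγ : ∀ m : ℕ, 0 < π / 2 * (1 / 4) ^ (m + 1) ∧ π / 2 * (1 / 4) ^ (m + 1) < π / 2 := by
    intro m
    refine ⟨by positivity, ?_⟩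
    have : ((1:ℝ) / 4) ^ (m + 1) < 1 := pow_lt_one₀ (by norm_num) (by norm_num) (by omega)
    have hp : 0 < π / 2 := by positivity
    nlinarith
  choose p l hl hl2 hp1 hp2 hp3 using fun m =>
    exists_hinge (h m) (F m (h m)) (π / 2 * (1 / 4) ^ (m + 1)) (hh m) (hFh m) (hγ m).1 (hγ m).2
  refine ⟨2, le_rfl, l, l, fun m => π - π / 2 * (1 / 4) ^ (m + 1), fun _ => 0, h, F, ?_, hF, ?_,
    hflat, hmod, ?_, ?_, ?_, ?_⟩
  · intro m
    have := hγ m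
    exact ⟨hl m, hl m, ⟨by linarith [pi_pos], by linarith⟩, hh m⟩
  · intro m
    refine ⟨p m, ?_, hp2 m, ?_⟩
    · simp only [hF0]
      exact hp1 m
    · simp only [hF0]
      exact hp3 m
  · exact fun m => ⟨hpos m, hflat m 2 le_rfl⟩
  · intro s
    refine ⟨(s + 1) + ∑ m ∈ Finset.range s, |CrNorm s (F m) (Icc 0 (h m))|, ?_⟩
    intro m
    have h0 : 0 ≤ ∑ m ∈ Finset.range s, |CrNorm s (F m) (Icc 0 (h m))| :=
      Finset.sum_nonneg fun _ _ => abs_nonneg _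
    by_cases hm : s ≤ m
    · have := hnorm m s hm
      linarith
    · have h1 : |CrNorm s (F m) (Icc 0 (h m))| ≤ _ :=
        Finset.single_le_sum (f := fun m => |CrNorm s (F m) (Icc 0 (h m))|)
          (fun i _ => abs_nonneg _) (Finset.mem_range.2 (not_le.1 hm))
      have h2 := le_abs_self (CrNorm s (F m) (Icc 0 (h m)))
      have h3 : (0:ℝ) ≤ s := Nat.cast_nonneg s
      linarith
  · refine Summable.of_nonneg_of_le (fun m => ?_) (fun m => ?_) (summable_geometric_two.mul_left 2)
    · have := hl m
      positivity
    · have h1 : l m + l m ≤ 4 * (1 / 4) ^ (m + 1) := by linarith [hl2 m, hhε m]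
      calc (2:ℝ) ^ (m + 1) * (l m + l m) ≤ 2 ^ (m + 1) * (4 * (1 / 4) ^ (m + 1)) :=
            mul_le_mul_of_nonneg_left h1 (by positivity)
        _ = 4 * (2 * (1 / 4)) ^ (m + 1) := by rw [mul_pow]; ring
        _ = 2 * (1 / 2) ^ m := by
            rw [show (2:ℝ) * (1 / 4) = 1 / 2 by norm_num, pow_succ]; ring
  · have h1 := hasSum_geometric_two' (π / 2)
    have h2 : (fun m : ℕ => (2:ℝ) ^ (m + 1) * (π - (π - π / 2 * (1 / 4) ^ (m + 1)))) =
        fun m : ℕ => π / 2 / 2 / 2 ^ m := by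
      funext m
      calc (2:ℝ) ^ (m + 1) * (π - (π - π / 2 * (1 / 4) ^ (m + 1)))
          = π / 2 * (2 * (1 / 4)) ^ (m + 1) := by rw [mul_pow]; ring
        _ = π / 2 / 2 / 2 ^ m := by
            rw [show (2:ℝ) * (1 / 4) = 1 / 2 by norm_num, pow_succ, one_div_pow]; ring
    rw [h2]
    exact_mod_cast h1
end
end

section
/- For each integer k ≥ 0 let b_k > 0 be such that the sequence (2^k b_k) is decreasing and super-exponentially converges to 0, set t_k = 4^{−k}, and let f_k ∈ C^∞([−t_k, t_k]) satisfy f_k'' > 0, f_k(0) = 0 = f_k'(0), and sup over k and x of |f_k^{(r)}(x)| < ∞ for each integer r ≥ 0. Then there exist K > 0 and f ∈ C^∞(ℝ) such that: (a) the restriction of f to [0, 3t_K] equals the sum of a series that is pliable at 0; (b) f' and f'' are positive on (0, 3t_K] and f^{(r)}(0) = 0 for all r ≥ 0; (c) f'(x) = b_k f_k'(x − t_k) + b_k for all k ≥ K and all x with |x − t_k| < t_{k+1}. -/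
open Set Filter Topology

noncomputable section

/-- `t_k = 4^{-k}`. -/
def tAux (k : ℕ) : ℝ := ((4 : ℝ) ^ k)⁻¹


/-- Increasing ramp: `0` for `y ≤ 3/8`, `1` for `y ≥ 7/16`. -/
def thRamp (y : ℝ) : ℝ := Real.smoothTransition (16 * y - 6)

/-- Bump supported in `[3/8, 7/4]`. -/
def psBump (y : ℝ) : ℝ := thRamp y - thRamp (y / 4)

lemma thRamp_zero {y : ℝ} (h : y ≤ 3 / 8) : thRamp y = 0 :=
  Real.smoothTransition.zero_of_nonpos (by linarith)

lemma thRamp_one {y : ℝ} (h : 7 / 16 ≤ y) : thRamp y = 1 :=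
  Real.smoothTransition.one_of_one_le (by linarith)

lemma thRamp_nonneg (y : ℝ) : 0 ≤ thRamp y := Real.smoothTransition.nonneg _

lemma thRamp_le_one (y : ℝ) : thRamp y ≤ 1 := Real.smoothTransition.le_one _

lemma thRamp_mono : Monotone thRamp := fun x y h =>
  Real.smoothTransition.monotone (by linarith)

lemma thRamp_contDiff : ContDiff ℝ (⊤ : ℕ∞) thRamp := by
  unfold thRamp
  exact Real.smoothTransition.contDiff.comp (by fun_prop)

lemma psBump_contDiff : ContDiff ℝ (⊤ : ℕ∞) psBump := by
  unfold psBump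
  exact thRamp_contDiff.sub (thRamp_contDiff.comp (by fun_prop))

lemma psBump_zero_left {y : ℝ} (h : y ≤ 3 / 8) : psBump y = 0 := by
  unfold psBump
  rcases le_total y 0 with h0 | h0
  · rw [thRamp_zero h, thRamp_zero (by linarith)]; simp
  · rw [thRamp_zero h, thRamp_zero (by linarith)]; simp

lemma psBump_zero_right {y : ℝ} (h : 7 / 4 ≤ y) : psBump y = 0 := by
  unfold psBump
  rw [thRamp_one (by linarith), thRamp_one (by linarith)]; simp

lemma psBump_iter_zero (j : ℕ) {y : ℝ} (h : y ∉ Icc (3 / 8 : ℝ) (7 / 4)) :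
    iteratedDeriv j psBump y = 0 := by
  have : psBump =ᶠ[𝓝 y] fun _ => (0 : ℝ) := by
    rw [mem_Icc, not_and_or, not_le, not_le] at h
    rcases h with h | h
    · filter_upwards [Iio_mem_nhds h] with z hz using psBump_zero_left (le_of_lt hz)
    · filter_upwards [Ioi_mem_nhds h] with z hz using psBump_zero_right (le_of_lt hz)
  rw [this.iteratedDeriv_eq]
  simp

lemma psBump_iter_bdd (j : ℕ) : ∃ B : ℝ, 0 ≤ B ∧ ∀ y, |iteratedDeriv j psBump y| ≤ B := by
  obtain ⟨B, hB⟩ := (isCompact_Icc (a := (3 / 8 : ℝ)) (b := 7 / 4)).exists_bound_of_continuousOn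
    (psBump_contDiff.continuous_iteratedDeriv j (by exact_mod_cast le_top)).continuousOn
  refine ⟨max B 0, le_max_right _ _, fun y => ?_⟩
  by_cases hy : y ∈ Icc (3 / 8 : ℝ) (7 / 4)
  · exact (hB y hy).trans (le_max_left _ _)
  · rw [psBump_iter_zero j hy]; simp

lemma psScaled_contDiff (c : ℝ) : ContDiff ℝ (⊤ : ℕ∞) (fun x => psBump (c * x)) :=
  psBump_contDiff.comp (by fun_prop)

lemma psScaled_iter (j : ℕ) (c x : ℝ) :
    iteratedDeriv j (fun x => psBump (c * x)) x = c ^ j * iteratedDeriv j psBump (c * x) := by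
  rw [iteratedDeriv_comp_const_mul (psBump_contDiff.of_le (by exact_mod_cast le_top))]

lemma tAux_pos (k : ℕ) : 0 < tAux k := by unfold tAux; positivity

lemma tAux_mul (k : ℕ) : (4 : ℝ) ^ k * tAux k = 1 := by
  unfold tAux; exact mul_inv_cancel₀ (by positivity)

lemma tAux_succ (k : ℕ) : tAux (k + 1) = tAux k / 4 := by
  unfold tAux; rw [pow_succ]; field_simp

lemma le_tAux_iff (k : ℕ) (x a : ℝ) : x ≤ a * tAux k ↔ 4 ^ k * x ≤ a := by
  unfold tAux
  rw [← div_eq_mul_inv, le_div_iff₀ (by positivity), mul_comm]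

lemma cover (N : ℕ) {x : ℝ} (hx : 0 < x) (hx' : x ≤ 3 * tAux (N + 1)) :
    ∃ k, N ≤ k ∧ 3 / 16 < 4 ^ k * x ∧ 4 ^ k * x ≤ 3 / 4 := by
  rw [le_tAux_iff] at hx'
  obtain ⟨n, h1, h2⟩ := exists_nat_pow_near_of_lt_one (x := 4 ^ (N + 1) * x / 3)
    (y := (1 / 4 : ℝ)) (by positivity) (by linarith) (by norm_num) (by norm_num)
  refine ⟨N + n, by omega, ?_, ?_⟩
  · rw [one_div, inv_pow, inv_lt_iff_one_lt_mul₀ (by positivity)] at h1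
    have : (4 : ℝ) ^ (n + 1) * (4 ^ (N + 1) * x / 3) = 16 / 3 * (4 ^ (N + n) * x) := by ring
    linarith
  · rw [one_div, inv_pow, le_inv_comm₀ (by positivity) (by positivity),
      le_inv_comm₀ (by positivity) (by positivity), ← one_div, le_div_iff₀ (by positivity)] at h2
    have : (4 ^ (N + 1) * x / 3) * (4 : ℝ) ^ n = 4 / 3 * (4 ^ (N + n) * x) := by ring
    linarith

/-- Bumps with index away from `k` and `k+1` vanish. -/
lemma psBump_far {k j : ℕ} {x : ℝ} (h1 : 7 / 64 ≤ 4 ^ k * x) (h2 : 4 ^ k * x ≤ 3 / 2)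
    (hj : j ≠ k) (hj' : j ≠ k + 1) : psBump (4 ^ j * x) = 0 := by
  have hx : 0 < x := by
    by_contra h
    have : (4 : ℝ) ^ k * x ≤ 0 := mul_nonpos_of_nonneg_of_nonpos (by positivity) (not_lt.1 h)
    linarith
  rcases lt_or_ge j k with h | h
  · apply psBump_zero_left
    have : (4 : ℝ) ^ (j + 1) ≤ 4 ^ k := pow_le_pow_right₀ (by norm_num) h
    have := mul_le_mul_of_nonneg_right this hx.le
    rw [pow_succ] at this
    linarith
  · apply psBump_zero_right
    have : (4 : ℝ) ^ (k + 2) ≤ 4 ^ j := pow_le_pow_right₀ (by norm_num) (by omega)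
    have := mul_le_mul_of_nonneg_right this hx.le
    rw [pow_add] at this
    linarith

lemma psBump_pair {k : ℕ} {x : ℝ} (h1 : 3 / 16 < 4 ^ k * x) (h2 : 4 ^ k * x ≤ 3 / 4) :
    psBump (4 ^ k * x) + psBump (4 ^ (k + 1) * x) = 1 := by
  unfold psBump
  have : (4 : ℝ) ^ (k + 1) * x / 4 = 4 ^ k * x := by ring
  rw [this, thRamp_one (y := 4 ^ (k + 1) * x) (by linarith),
    thRamp_zero (y := 4 ^ k * x / 4) (by linarith)]
  ring

/-- A flat function is `O(x^n)` with all derivatives. -/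
lemma flat_bound (f : ℝ → ℝ) (hf : ContDiff ℝ (⊤ : ℕ∞) f) (h0 : ∀ r, iteratedDeriv r f 0 = 0)
    (n : ℕ) : ∀ r, ∃ C : ℝ, 0 ≤ C ∧ ∀ x ∈ Icc (0 : ℝ) 2, |iteratedDeriv r f x| ≤ C * x ^ n := by
  induction n with
  | zero =>
    intro r
    obtain ⟨B, hB⟩ := (isCompact_Icc (a := (0 : ℝ)) (b := 2)).exists_bound_of_continuousOn
      (hf.continuous_iteratedDeriv r (by exact_mod_cast le_top)).continuousOn
    refine ⟨max B 0, le_max_right _ _, fun y hy => ?_⟩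
    simpa using (hB y hy).trans (le_max_left _ 0)
  | succ n ih =>
    intro r
    obtain ⟨C, hC, h⟩ := ih (r + 1)
    refine ⟨C, hC, fun x hx => ?_⟩
    have hd : Differentiable ℝ (iteratedDeriv r f) :=
      hf.differentiable_iteratedDeriv r (by exact_mod_cast ENat.natCast_lt_top r)
    have := (convex_Icc (0 : ℝ) x).norm_image_sub_le_of_norm_deriv_le
      (f := iteratedDeriv r f) (C := C * x ^ n) (x := 0) (y := x)
      (fun y _ => hd y) (fun y hy => by
        rw [← iteratedDeriv_succ]
        refine (h y ⟨hy.1, hy.2.trans hx.2⟩).trans ?_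
        have := pow_le_pow_left₀ hy.1 hy.2 n
        gcongr) ⟨le_rfl, hx.1⟩ ⟨hx.1, le_rfl⟩
    rw [h0, sub_zero, sub_zero, Real.norm_eq_abs, Real.norm_eq_abs, abs_of_nonneg hx.1] at this
    rw [pow_succ]; linarith

/-- A super-exponentially decaying sequence controlling all derivatives of a flat function. -/
lemma flat_seq (f : ℝ → ℝ) (hf : ContDiff ℝ (⊤ : ℕ∞) f) (h0 : ∀ r, iteratedDeriv r f 0 = 0) :
    ∃ c : ℕ → ℝ, (∀ k, 0 < c k) ∧ (∀ n : ℕ, ∃ D : ℝ, ∀ k, c k ≤ D * ((4 : ℝ) ^ (n * k))⁻¹) ∧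
      ∀ r, ∃ A : ℝ, 0 ≤ A ∧ ∀ k, ∀ x ∈ Icc (0 : ℝ) (2 * tAux k),
        |iteratedDeriv r f x| ≤ A * c k := by
  choose C hC0 hC using flat_bound f hf h0
  let D : ℕ → ℝ := fun n => 4 ^ (n * n) + ∑ r ∈ Finset.range (n + 1), C n r * 2 ^ n
  have hsum : ∀ n, 0 ≤ ∑ r ∈ Finset.range (n + 1), C n r * 2 ^ n := fun n =>
    Finset.sum_nonneg fun r _ => mul_nonneg (hC0 n r) (by positivity)
  have hD4 : ∀ n, (4 : ℝ) ^ (n * n) ≤ D n := fun n => by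
    have := hsum n; simp only [D]; linarith
  have hD1 : ∀ n, 1 ≤ D n := fun n => (one_le_pow₀ (by norm_num)).trans (hD4 n)
  have hDm : ∀ n r k, r ≤ n → ∀ x ∈ Icc (0 : ℝ) (2 * tAux k),
      |iteratedDeriv r f x| ≤ D n * ((4 : ℝ) ^ (n * k))⁻¹ := by
    intro n r k hr x hx
    have ht : tAux k ≤ 1 := by
      unfold tAux; exact inv_le_one_of_one_le₀ (one_le_pow₀ (by norm_num))
    refine (hC n r x ⟨hx.1, hx.2.trans (by linarith)⟩).trans ?_
    have h1 : x ^ n ≤ (2 * tAux k) ^ n := pow_le_pow_left₀ hx.1 hx.2 n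
    have h2 : (2 * tAux k) ^ n = 2 ^ n * ((4 : ℝ) ^ (n * k))⁻¹ := by
      rw [mul_pow, tAux, inv_pow, ← pow_mul, mul_comm k n]
    have h3 : C n r * 2 ^ n ≤ D n := by
      have := Finset.single_le_sum (f := fun r => C n r * 2 ^ n)
        (fun r _ => mul_nonneg (hC0 n r) (by positivity))
        (Finset.mem_range.2 (Nat.lt_succ_of_le hr))
      have h4 : (0 : ℝ) ≤ 4 ^ (n * n) := by positivity
      simp only [D]; linarith
    calc C n r * x ^ n ≤ C n r * (2 * tAux k) ^ n := mul_le_mul_of_nonneg_left h1 (hC0 n r)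
      _ = (C n r * 2 ^ n) * ((4 : ℝ) ^ (n * k))⁻¹ := by rw [h2]; ring
      _ ≤ _ := mul_le_mul_of_nonneg_right h3 (by positivity)
  have hpos : ∀ n k, 0 < D n * ((4 : ℝ) ^ (n * k))⁻¹ := fun n k => by
    have := hD1 n; positivity
  have hbdd : ∀ k, BddBelow (range fun n => D n * ((4 : ℝ) ^ (n * k))⁻¹) := fun k =>
    ⟨0, by rintro _ ⟨n, rfl⟩; exact (hpos n k).le⟩
  refine ⟨fun k => ⨅ n, D n * ((4 : ℝ) ^ (n * k))⁻¹, fun k => ?_, fun n => ⟨D n, fun k => ?_⟩,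
    fun r => ⟨D r, by linarith [hD1 r], fun k x hx => ?_⟩⟩
  · have : (0 : ℝ) < ((4 : ℝ) ^ (k * k))⁻¹ := by positivity
    refine this.trans_le (le_ciInf fun n => ?_)
    rw [inv_le_iff_one_le_mul₀ (by positivity)]
    calc (1 : ℝ) = (4 ^ (n * k)) * ((4 : ℝ) ^ (n * k))⁻¹ := (mul_inv_cancel₀ (by positivity)).symm
      _ ≤ (4 ^ (n * n) * 4 ^ (k * k)) * ((4 : ℝ) ^ (n * k))⁻¹ := by
        gcongr
        rw [← pow_add]
        apply pow_le_pow_right₀ (by norm_num)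
        nlinarith [mul_self_nonneg ((n : ℤ) - k), le_total n k]
      _ ≤ (D n * 4 ^ (k * k)) * ((4 : ℝ) ^ (n * k))⁻¹ := by
        gcongr; exact hD4 n
      _ = _ := by ring
  · exact ciInf_le (hbdd k) n
  · rw [← div_le_iff₀' (by linarith [hD1 r])]
    refine le_ciInf fun n => ?_
    rw [div_le_iff₀' (by linarith [hD1 r])]
    rcases le_total r n with h | h
    · exact (hDm n r k h x hx).trans (le_mul_of_one_le_left (hpos n k).le (hD1 r))
    · refine (hDm r r k le_rfl x hx).trans ?_
      have h1 : ((4 : ℝ) ^ (r * k))⁻¹ ≤ ((4 : ℝ) ^ (n * k))⁻¹ := by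
        apply inv_anti₀ (by positivity)
        exact pow_le_pow_right₀ (by norm_num) (Nat.mul_le_mul_right k h)
      have h2 : ((4 : ℝ) ^ (n * k))⁻¹ ≤ D n * ((4 : ℝ) ^ (n * k))⁻¹ :=
        le_mul_of_one_le_left (by positivity) (hD1 n)
      exact mul_le_mul_of_nonneg_left (h1.trans h2) (by linarith [hD1 r])

lemma psMul_eventually_zero {k : ℕ} {x : ℝ} (u : ℝ → ℝ)
    (h : 4 ^ k * x ∉ Icc (3 / 8 : ℝ) (7 / 4)) :
    (fun x => psBump (4 ^ k * x) * u x) =ᶠ[𝓝 x] fun _ => (0 : ℝ) := by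
  have hc : Continuous fun x : ℝ => 4 ^ k * x := by fun_prop
  filter_upwards [(isClosed_Icc.isOpen_compl.preimage hc).mem_nhds h] with z hz
  have : psBump (4 ^ k * z) = 0 := by
    have := psBump_iter_zero 0 hz
    simpa using this
  rw [this, zero_mul]

lemma psMul_iter_zero (n : ℕ) {k : ℕ} {x : ℝ} (u : ℝ → ℝ)
    (h : 4 ^ k * x ∉ Icc (3 / 8 : ℝ) (7 / 4)) :
    iteratedDeriv n (fun x => psBump (4 ^ k * x) * u x) x = 0 := by
  rw [(psMul_eventually_zero u h).iteratedDeriv_eq]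
  simp

lemma psMul_bound (n : ℕ) : ∃ W : ℝ, 0 ≤ W ∧ ∀ (k : ℕ) (x : ℝ) (u : ℝ → ℝ) (A : ℝ), 0 ≤ A →
    ContDiffAt ℝ n u x → (∀ i ≤ n, |iteratedDeriv i u x| ≤ A) →
    |iteratedDeriv n (fun x => psBump (4 ^ k * x) * u x) x| ≤ W * A * 4 ^ (k * n) := by
  choose B hB0 hB using psBump_iter_bdd
  refine ⟨∑ i ∈ Finset.range (n + 1), n.choose i * B i,
    Finset.sum_nonneg fun i _ => mul_nonneg (by positivity) (hB0 i), ?_⟩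
  intro k x u A hA hu hi
  have h1 : ContDiffAt ℝ n (fun x => psBump (4 ^ k * x)) x :=
    ((psScaled_contDiff (4 ^ k)).of_le (by exact_mod_cast le_top)).contDiffAt
  have := iteratedDeriv_mul h1 hu
  change |iteratedDeriv n ((fun x => psBump (4 ^ k * x)) * u) x| ≤ _
  rw [this, Finset.sum_mul, Finset.sum_mul]
  refine (Finset.abs_sum_le_sum_abs _ _).trans (Finset.sum_le_sum fun i hi' => ?_)
  have hin : i ≤ n := Nat.lt_succ_iff.1 (Finset.mem_range.1 hi')
  rw [psScaled_iter, abs_mul, abs_mul, abs_mul, Nat.abs_cast, abs_of_nonneg (by positivity :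
    (0 : ℝ) ≤ (4 ^ k) ^ i), ← pow_mul]
  have e1 : (4 : ℝ) ^ (k * i) ≤ 4 ^ (k * n) :=
    pow_le_pow_right₀ (by norm_num) (Nat.mul_le_mul_left k hin)
  calc (n.choose i : ℝ) * (4 ^ (k * i) * |iteratedDeriv i psBump (4 ^ k * x)|) *
        |iteratedDeriv (n - i) u x|
      ≤ (n.choose i : ℝ) * (4 ^ (k * n) * B i) * A := by
        have := hB i (4 ^ k * x)
        have := hi (n - i) (Nat.sub_le n i)
        have := hB0 i
        gcongr
    _ = _ := by ring

lemma suppOn_psMul {a b : ℝ} (k : ℕ) (u : ℝ → ℝ) :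
    suppOn a b (fun x => psBump (4 ^ k * x) * u x) ⊆
      Icc a b ∩ {x | 3 / 8 ≤ 4 ^ k * x ∧ 4 ^ k * x ≤ 7 / 4} := by
  apply closure_minimal
  · rintro x ⟨hx, hx'⟩
    refine ⟨hx, ?_, ?_⟩ <;> by_contra h <;> apply hx'
    · simp only [psBump_zero_left (le_of_not_ge h), zero_mul]
    · simp only [psBump_zero_right (le_of_not_ge h), zero_mul]
  · refine isClosed_Icc.inter (IsClosed.inter ?_ ?_)
    · exact isClosed_le (f := fun _ : ℝ => (3 / 8 : ℝ)) (g := fun x : ℝ => 4 ^ k * x)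
        continuous_const (by fun_prop)
    · exact isClosed_le (f := fun x : ℝ => 4 ^ k * x) (g := fun _ : ℝ => (7 / 4 : ℝ))
        (by fun_prop) continuous_const

lemma pliable_of_flat (f : ℝ → ℝ) (hf : ContDiff ℝ (⊤ : ℕ∞) f)
    (h0 : ∀ r, iteratedDeriv r f 0 = 0) (N : ℕ) (hN : 1 ≤ N) :
    Pliable 0 (3 * tAux (N + 1)) 0 f := by
  obtain ⟨c, hc, hcs, hcA⟩ := flat_seq f hf h0
  let u : ℕ → ℝ → ℝ := fun k x => (c k)⁻¹ * f x
  have husm : ∀ k, ContDiff ℝ (⊤ : ℕ∞) (u k) := fun k => contDiff_const.mul hf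
  let g : ℕ → ℝ → ℝ := fun k x => psBump (4 ^ k * x) * u k x
  have hgsm : ∀ k, ContDiff ℝ (⊤ : ℕ∞) (g k) := fun k => (psScaled_contDiff _).mul (husm k)
  have hT : 0 < 3 * tAux (N + 1) := by have := tAux_pos (N + 1); linarith
  have hsupp : ∀ k, suppOn 0 (3 * tAux (N + 1)) (g k) ⊆
      Icc 0 (3 * tAux (N + 1)) ∩ {x | 3 / 8 ≤ 4 ^ k * x ∧ 4 ^ k * x ≤ 7 / 4} :=
    fun k => suppOn_psMul k (u k)
  have hcast : ∀ k : ℤ, (N : ℤ) ≤ k → ((k.toNat : ℕ) : ℤ) = k := fun k hk =>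
    Int.toNat_of_nonneg (by omega)
  refine ⟨N, fun k => c k.toNat, fun k => g k.toNat, ?_⟩
  constructor
  · -- sum
    intro x hx
    rcases hx.1.eq_or_lt with h | h
    · subst h
      have hf0 : f 0 = 0 := by simpa using h0 0
      simp only [g, u, hf0, mul_zero]
      exact hasSum_zero
    · obtain ⟨k, hk, h1, h2⟩ := cover N h hx.2
      have hpair := psBump_pair h1 h2
      have key : f x = ∑ j ∈ ({⟨(k : ℤ), by omega⟩, ⟨(k : ℤ) + 1, by omega⟩} :
          Finset {j : ℤ // (N : ℤ) ≤ j}), c j.val.toNat * g j.val.toNat x := by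
        rw [Finset.sum_pair (by simp)]
        have e : ((k : ℤ) + 1).toNat = k + 1 := by omega
        simp only [Int.toNat_natCast, e, g, u]
        have := (hc k).ne'
        have := (hc (k + 1)).ne'
        calc f x = (psBump (4 ^ k * x) + psBump (4 ^ (k + 1) * x)) * f x := by
              rw [hpair, one_mul]
          _ = _ := by
              rw [mul_left_comm, mul_inv_cancel_left₀ (hc k).ne', mul_left_comm (c (k + 1)),
                mul_inv_cancel_left₀ (hc (k + 1)).ne', add_mul]
      rw [key]
      apply hasSum_sum_of_ne_finset_zero
      rintro ⟨j, hj⟩ hjn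
      simp only [Finset.mem_insert, Finset.mem_singleton, Subtype.mk.injEq, not_or] at hjn
      simp only [g]
      rw [psBump_far (k := k) (by linarith) (by linarith) (by omega) (by omega)]
      simp
  · intro k _; exact hc _
  · intro γ
    obtain ⟨n, hn⟩ := exists_nat_gt γ
    obtain ⟨D, hD⟩ := hcs n
    have hD0 : Tendsto (fun k : ℤ => D * ((2 : ℝ) ^ (γ - 2 * n)) ^ (k.toNat)) atTop (𝓝 0) := by
      have h1 : (2 : ℝ) ^ (γ - 2 * n) < 1 := by
        apply Real.rpow_lt_one_of_one_lt_of_neg (by norm_num)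
        have : (0 : ℝ) ≤ n := Nat.cast_nonneg n
        linarith
      have h2 : Tendsto (fun k : ℤ => k.toNat) atTop atTop := by
        refine tendsto_atTop.2 fun m => ?_
        filter_upwards [eventually_ge_atTop (m : ℤ)] with k hk
        omega
      have h3 := (tendsto_pow_atTop_nhds_zero_of_lt_one (by positivity) h1).comp h2
      simpa using h3.const_mul D
    refine tendsto_of_tendsto_of_tendsto_of_le_of_le' tendsto_const_nhds hD0 ?_ ?_
    · filter_upwards with k
      have := (hc k.toNat).le
      positivity
    · filter_upwards [eventually_ge_atTop (0 : ℤ)] with k hk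
      have hk' : ((k.toNat : ℕ) : ℤ) = k := Int.toNat_of_nonneg hk
      have hk2 : (k : ℝ) = (k.toNat : ℝ) := by exact_mod_cast hk'.symm
      rw [hk2]
      generalize k.toNat = m
      have e : ((2 : ℝ) ^ (γ - 2 * n)) ^ m = 2 ^ (γ * m) * ((4 : ℝ) ^ (n * m))⁻¹ := by
        have h4 : ((4 : ℝ) ^ (n * m)) = 2 ^ (2 * n * m : ℝ) := by
          rw [show (4 : ℝ) = 2 ^ 2 by norm_num, ← pow_mul, ← Real.rpow_natCast]
          push_cast; ring_nf
        rw [h4, ← Real.rpow_neg (by norm_num), ← Real.rpow_add (by norm_num),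
          ← Real.rpow_natCast, ← Real.rpow_mul (by norm_num)]
        ring_nf
      rw [e]
      calc (2 : ℝ) ^ (γ * m) * c m ≤ 2 ^ (γ * m) * (D * ((4 : ℝ) ^ (n * m))⁻¹) :=
            mul_le_mul_of_nonneg_left (hD m) (by positivity)
        _ = _ := by ring
  · intro k _; exact (hgsm _).contDiffOn
  · intro k _
    exact isCompact_Icc.of_isClosed_subset isClosed_closure
      ((hsupp k.toNat).trans inter_subset_left)
  · intro k _ x hx
    have := hsupp k.toNat hx
    refine ⟨this.1, fun h => ?_⟩
    have h' : x = 0 := h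
    have h2 := this.2.1
    rw [h', mul_zero] at h2
    norm_num at h2
  · rintro x ⟨hx, hx0⟩
    have hxpos : 0 < x := lt_of_le_of_ne hx.1 (fun h => hx0 h.symm)
    refine ⟨Ioi (x / 2), Ioi_mem_nhds (by linarith), ?_⟩
    obtain ⟨m, hm⟩ := pow_unbounded_of_one_lt (4 / x) (by norm_num : (1 : ℝ) < 4)
    refine (Set.finite_Icc (N : ℤ) m).subset ?_
    rintro k ⟨hk, y, hy, hy'⟩
    refine ⟨hk, ?_⟩
    by_contra hkm
    have h1 := (hsupp k.toNat hy).2.2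
    have hy2 : x / 2 < y := hy'
    have h2 : (4 : ℝ) ^ m ≤ 4 ^ k.toNat := pow_le_pow_right₀ (by norm_num) (by omega)
    have h3 : 4 / x * (x / 2) ≤ 4 ^ k.toNat * y :=
      mul_le_mul (hm.le.trans h2) hy2.le (by linarith) (by positivity)
    have h4 : 4 / x * (x / 2) = 2 := by field_simp; norm_num
    linarith
  · intro r
    choose A hA0 hA using hcA
    choose W hW0 hW using psMul_bound
    let S : ℕ → ℝ := fun n => ∑ i ∈ Finset.range (n + 1), A i
    have hS0 : ∀ n, 0 ≤ S n := fun n => Finset.sum_nonneg fun i _ => hA0 i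
    refine ⟨-(2 * r : ℝ), ∑ i ∈ Finset.range (r + 1), W i * S i, fun k hk => ?_⟩
    have hk2 : (k : ℝ) = (k.toNat : ℝ) := by exact_mod_cast (hcast k hk).symm
    rw [hk2]
    generalize k.toNat = m
    have h4 : (2 : ℝ) ^ (-(2 * r : ℝ) * m) = ((4 : ℝ) ^ (m * r))⁻¹ := by
      rw [show (4 : ℝ) = 2 ^ 2 by norm_num, ← pow_mul, ← Real.rpow_natCast,
        ← Real.rpow_neg (by norm_num)]
      push_cast; ring_nf
    rw [h4, inv_mul_le_iff₀ (by positivity), CrNorm, Finset.mul_sum]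
    refine Finset.sum_le_sum fun i hi => ?_
    have hir : i ≤ r := Nat.lt_succ_iff.1 (Finset.mem_range.1 hi)
    have hWS : 0 ≤ W i * S i := mul_nonneg (hW0 i) (hS0 i)
    refine Real.iSup_le (fun x => ?_) (by positivity)
    have e4 : (4 : ℝ) ^ (m * i) ≤ 4 ^ (m * r) :=
      pow_le_pow_right₀ (by norm_num) (Nat.mul_le_mul_left m hir)
    rw [iteratedDerivWithin_eq_iteratedDeriv (uniqueDiffOn_Icc hT)
      ((hgsm m).of_le (by exact_mod_cast le_top)).contDiffAt x.2]
    by_cases hx : 4 ^ m * (x : ℝ) ∈ Icc (3 / 8 : ℝ) (7 / 4)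
    · have hb := hW i m x (u m) (S i) (hS0 i)
        ((husm m).of_le (by exact_mod_cast le_top)).contDiffAt (fun j hj => by
          simp only [u]
          rw [iteratedDeriv_const_mul _ (hf.of_le (by exact_mod_cast le_top)).contDiffAt, abs_mul,
            abs_of_pos (inv_pos.2 (hc m)), inv_mul_le_iff₀ (hc m), mul_comm (c m)]
          refine (hA j m x ⟨x.2.1, ?_⟩).trans ?_
          · rw [le_tAux_iff]; linarith [hx.2]
          · refine mul_le_mul_of_nonneg_right ?_ (hc m).le
            exact Finset.single_le_sum (f := A) (fun i _ => hA0 i)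
              (Finset.mem_range.2 (Nat.lt_succ_of_le hj)))
      refine hb.trans ?_
      rw [mul_comm]
      exact mul_le_mul_of_nonneg_right e4 hWS
    · have : iteratedDeriv i (g m) x = 0 := psMul_iter_zero i (u m) hx
      rw [this, abs_zero]
      positivity
  · refine ⟨5, by norm_num, fun ε hε _ => ?_⟩
    have key : ∀ k : ℤ, (suppOn 0 (3 * tAux (N + 1)) (g k.toNat) ∩
        {x ∈ Icc 0 (3 * tAux (N + 1)) | ε ≤ |x - 0| ∧ |x - 0| ≤ 2 * ε}).Nonempty →
        3 / 16 ≤ 4 ^ k.toNat * ε ∧ 4 ^ k.toNat * ε ≤ 7 / 4 := by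
      rintro k ⟨x, hx, hx1, hx2, hx3⟩
      rw [sub_zero, abs_of_nonneg hx1.1] at hx2 hx3
      obtain ⟨_, h1, h2⟩ := hsupp _ hx
      have h4 : (0 : ℝ) < 4 ^ k.toNat := by positivity
      have := mul_le_mul_of_nonneg_left hx2 h4.le
      have := mul_le_mul_of_nonneg_left hx3 h4.le
      constructor <;> linarith
    have hsub : ∃ m : ℤ, {k : ℤ | (N : ℤ) ≤ k ∧ (suppOn 0 (3 * tAux (N + 1)) (g k.toNat) ∩
        {x ∈ Icc 0 (3 * tAux (N + 1)) | ε ≤ |x - 0| ∧ |x - 0| ≤ 2 * ε}).Nonempty} ⊆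
        ((Finset.Icc (m - 1) (m + 1) : Finset ℤ) : Set ℤ) := by
      by_cases hne : {k : ℤ | (N : ℤ) ≤ k ∧ (suppOn 0 (3 * tAux (N + 1)) (g k.toNat) ∩
        {x ∈ Icc 0 (3 * tAux (N + 1)) | ε ≤ |x - 0| ∧ |x - 0| ≤ 2 * ε}).Nonempty}.Nonempty
      · obtain ⟨m, hm, hm'⟩ := hne
        refine ⟨m, ?_⟩
        rintro k ⟨hk, hk'⟩
        have aux : ∀ i j : ℕ, 3 / 16 ≤ 4 ^ i * ε → 4 ^ j * ε ≤ 7 / 4 → j ≤ i + 1 := by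
          intro i j hi hj
          by_contra hlt
          have : (4 : ℝ) ^ (i + 2) ≤ 4 ^ j := pow_le_pow_right₀ (by norm_num) (by omega)
          have := mul_le_mul_of_nonneg_right this hε.le
          rw [pow_add] at this
          linarith
        have a1 := aux m.toNat k.toNat (key m hm').1 (key k hk').2
        have a2 := aux k.toNat m.toNat (key k hk').1 (key m hm').2
        simp only [Finset.coe_Icc, mem_Icc]
        omega
      · rw [not_nonempty_iff_eq_empty] at hne
        rw [hne]
        exact ⟨0, empty_subset _⟩
    obtain ⟨m, hm⟩ := hsub
    refine ⟨(Finset.finite_toSet _).subset hm, ?_, fun k hk hk' => ?_⟩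
    · refine (Set.ncard_le_ncard hm (Finset.finite_toSet _)).trans ?_
      rw [Set.ncard_coe_finset, Int.card_Icc]
      omega
    · have h1 := (key k hk').1
      have hk2 : (k : ℝ) = (k.toNat : ℝ) := by exact_mod_cast (hcast k hk).symm
      have hk1 : 1 ≤ k.toNat := by omega
      rw [hk2]
      generalize k.toNat = n at *
      have e : (2 : ℝ) ^ (-(n : ℝ) * ((5 : ℕ) : ℝ)) = ((4 : ℝ) ^ n * 8 ^ n)⁻¹ := by
        rw [← mul_pow, show (4 * 8 : ℝ) = 2 ^ 5 by norm_num, ← pow_mul, ← Real.rpow_natCast,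
          ← Real.rpow_neg (by norm_num)]
        push_cast; ring_nf
      rw [e, inv_le_iff_one_le_mul₀ (by positivity)]
      have h8 : (8 : ℝ) ≤ 8 ^ n := le_self_pow₀ (by norm_num) (by omega)
      have := mul_le_mul h1 h8 (by norm_num) (by positivity)
      linarith

lemma flat_of_zero (f : ℝ → ℝ) (hf : ContDiff ℝ (⊤ : ℕ∞) f) (h : ∀ x ≤ 0, f x = 0) (r : ℕ) :
    iteratedDeriv r f 0 = 0 := by
  have hc : IsClosed {x | iteratedDeriv r f x = 0} :=
    isClosed_eq (hf.continuous_iteratedDeriv r (by exact_mod_cast le_top)) continuous_const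
  have hs : Iio (0 : ℝ) ⊆ {x | iteratedDeriv r f x = 0} := by
    intro x hx
    have : f =ᶠ[𝓝 x] fun _ => (0 : ℝ) := by
      filter_upwards [Iio_mem_nhds hx] with z hz using h z (le_of_lt hz)
    change iteratedDeriv r f x = 0
    rw [this.iteratedDeriv_eq]
    simp
  have := hc.closure_subset_iff.2 hs
  rw [closure_Iio] at this
  exact this (by simp)

/-- Facts about the derivative of a smooth function on a symmetric interval. -/
lemma deriv_facts (t : ℝ) (ht : 0 < t) (f : ℝ → ℝ)
    (hf : ContDiffOn ℝ (⊤ : ℕ∞) f (Icc (-t) t)) :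
    (∀ y ∈ Ioo (-t) t, ContDiffAt ℝ (⊤ : ℕ∞) (derivWithin f (Icc (-t) t)) y) ∧
    (∀ i, ∀ y ∈ Ioo (-t) t, iteratedDeriv i (derivWithin f (Icc (-t) t)) y =
      iteratedDerivWithin (i + 1) f (Icc (-t) t) y) ∧
    (∀ y ∈ Ioo (-t) t, HasDerivAt (derivWithin f (Icc (-t) t))
      (iteratedDerivWithin 2 f (Icc (-t) t) y) y) := by
  have hu : UniqueDiffOn ℝ (Icc (-t) t) := uniqueDiffOn_Icc (by linarith)
  have hd : ContDiffOn ℝ (⊤ : ℕ∞) (derivWithin f (Icc (-t) t)) (Icc (-t) t) :=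
    hf.derivWithin hu (by exact_mod_cast le_top)
  have h1 : ∀ y ∈ Ioo (-t) t, ContDiffAt ℝ (⊤ : ℕ∞) (derivWithin f (Icc (-t) t)) y :=
    fun y hy => (hd y (Ioo_subset_Icc_self hy)).contDiffAt (Icc_mem_nhds hy.1 hy.2)
  have h2 : ∀ i, ∀ y ∈ Ioo (-t) t, iteratedDeriv i (derivWithin f (Icc (-t) t)) y =
      iteratedDerivWithin (i + 1) f (Icc (-t) t) y := by
    intro i y hy
    rw [iteratedDerivWithin_succ', iteratedDerivWithin_eq_iteratedDeriv hu
      ((h1 y hy).of_le (by exact_mod_cast le_top)) (Ioo_subset_Icc_self hy)]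
  refine ⟨h1, h2, fun y hy => ?_⟩
  have := ((h1 y hy).differentiableAt (by simp)).hasDerivAt
  have e := h2 1 y hy
  rw [iteratedDeriv_one] at e
  rw [e] at this
  exact this

/-- Main gluing: the derivative `h` of the function we look for. -/
lemma glue (b : ℕ → ℝ) (hbpos : ∀ k, 0 < b k)
    (hbsup : ∀ γ : ℝ,
      Tendsto (fun k : ℕ => (2 : ℝ) ^ (γ * (k : ℝ)) * ((2 : ℝ) ^ k * b k)) atTop (𝓝 0))
    (φ : ℕ → ℝ → ℝ)
    (hφ : ∀ k x, 0 < 4 ^ k * x → 4 ^ k * x < 2 → ContDiffAt ℝ (⊤ : ℕ∞) (φ k) x)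
    (hφb : ∀ i, ∃ A : ℝ, 0 ≤ A ∧ ∀ k x, 0 < 4 ^ k * x → 4 ^ k * x < 2 →
      |iteratedDeriv i (φ k) x| ≤ A * b k) (N : ℕ) :
    ContDiff ℝ (⊤ : ℕ∞) (fun x => ∑' k : ℕ, psBump (4 ^ (k + N) * x) * φ (k + N) x) := by
  choose A hA0 hA using hφb
  choose W hW0 hW using psMul_bound
  let S : ℕ → ℝ := fun n => ∑ i ∈ Finset.range (n + 1), A i
  have hS0 : ∀ n, 0 ≤ S n := fun n => Finset.sum_nonneg fun i _ => hA0 i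
  refine contDiff_tsum (N := ⊤)
    (v := fun n k => W n * S n * (4 ^ (n * (k + N)) * b (k + N))) ?_ ?_ ?_
  · intro k
    rw [contDiff_iff_contDiffAt]
    intro x
    by_cases hx : 4 ^ (k + N) * x ∈ Icc (3 / 8 : ℝ) (7 / 4)
    · exact (psScaled_contDiff _).contDiffAt.mul (hφ _ x (by linarith [hx.1]) (by linarith [hx.2]))
    · exact contDiffAt_const.congr_of_eventuallyEq (psMul_eventually_zero (φ (k + N)) hx)
  · intro n _
    apply Summable.mul_left
    have hs : Summable fun k : ℕ => 4 ^ (n * k) * b k := by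
      obtain ⟨C, hC⟩ := (hbsup (2 * n)).bddAbove_range
      have hC' : ∀ k : ℕ, 4 ^ (n * k) * b k ≤ C * (1 / 2) ^ k := by
        intro k
        have h1 := hC (mem_range_self k)
        have h4 : ((4 : ℝ) ^ (n * k)) = 2 ^ (2 * n * k : ℝ) := by
          rw [show (4 : ℝ) = 2 ^ 2 by norm_num, ← pow_mul, ← Real.rpow_natCast]
          push_cast; ring_nf
        rw [← h4] at h1
        rw [one_div, inv_pow, ← div_eq_mul_inv, le_div_iff₀ (by positivity)]
        linarith
      refine Summable.of_nonneg_of_le (fun k => ?_) hC'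
        ((summable_geometric_of_lt_one (by norm_num) (by norm_num)).mul_left C)
      have := (hbpos k).le
      positivity
    exact (summable_nat_add_iff N).2 hs
  · intro n k x _
    rw [norm_iteratedFDeriv_eq_norm_iteratedDeriv, Real.norm_eq_abs]
    have hb := (hbpos (k + N)).le
    by_cases hx : 4 ^ (k + N) * x ∈ Icc (3 / 8 : ℝ) (7 / 4)
    · have h1 : 0 < 4 ^ (k + N) * x := by linarith [hx.1]
      have h2 : 4 ^ (k + N) * x < 2 := by linarith [hx.2]
      have := hW n (k + N) x (φ (k + N)) (S n * b (k + N)) (mul_nonneg (hS0 n) hb)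
        ((hφ _ x h1 h2).of_le (by exact_mod_cast le_top)) (fun i hi => by
          refine (hA i _ x h1 h2).trans (mul_le_mul_of_nonneg_right ?_ hb)
          exact Finset.single_le_sum (f := A) (fun i _ => hA0 i)
              (Finset.mem_range.2 (Nat.lt_succ_of_le hi)))
      refine this.trans (le_of_eq ?_)
      rw [mul_comm (k + N) n]; ring
    · rw [psMul_iter_zero n (φ (k + N)) hx, abs_zero]
      exact mul_nonneg (mul_nonneg (hW0 n) (hS0 n)) (by positivity)

lemma glue_near (φ : ℕ → ℝ → ℝ) (N k : ℕ) (hk : N ≤ k) (x : ℝ) (h1 : 7 / 64 ≤ 4 ^ k * x)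
    (h2 : 4 ^ k * x ≤ 3 / 2) :
    ∑' k : ℕ, psBump (4 ^ (k + N) * x) * φ (k + N) x =
      psBump (4 ^ k * x) * φ k x + psBump (4 ^ (k + 1) * x) * φ (k + 1) x := by
  obtain ⟨m, rfl⟩ := Nat.exists_eq_add_of_le' hk
  rw [tsum_eq_sum (s := {m, m + 1}), Finset.sum_pair (by omega)]
  · rw [show m + 1 + N = m + N + 1 by omega]
  · intro j hj
    simp only [Finset.mem_insert, Finset.mem_singleton, not_or] at hj
    rw [psBump_far h1 h2 (by omega) (by omega), zero_mul]

/-- Boman's patching lemma (Lemma A.1 of the paper). Given positive `b_k`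
with `(2^k b_k)` decreasing and super-exponentially converging to `0`, `t_k = 4^{-k}`,
and `f_k ∈ C^∞([-t_k, t_k])` with `f_k'' > 0`, `f_k(0) = 0 = f_k'(0)` and all derivatives
bounded uniformly in `k` and `x`, there are `K > 0` and `f ∈ C^∞(ℝ)` such that:
(a) the restriction of `f` to `[0, 3 t_K]` is the sum of a series pliable at `0`;
(b) `f' > 0` and `f'' > 0` on `(0, 3 t_K]`, and `f^{(r)}(0) = 0` for all `r`;
(c) `f'(x) = b_k f_k'(x - t_k) + b_k` whenever `k ≥ K` and `|x - t_k| < t_{k+1}`. -/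
theorem stmt17 (b : ℕ → ℝ) (hbpos : ∀ k, 0 < b k)
    (hbdec : ∀ k : ℕ, (2 : ℝ) ^ (k + 1) * b (k + 1) ≤ (2 : ℝ) ^ k * b k)
    (hbsup : ∀ γ : ℝ,
      Tendsto (fun k : ℕ => (2 : ℝ) ^ (γ * (k : ℝ)) * ((2 : ℝ) ^ k * b k)) atTop (𝓝 0))
    (fs : ℕ → ℝ → ℝ)
    (hfsm : ∀ k, ContDiffOn ℝ (⊤ : ℕ∞) (fs k) (Set.Icc (-tAux k) (tAux k)))
    (hf'' : ∀ k, ∀ x ∈ Set.Icc (-tAux k) (tAux k),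
      0 < iteratedDerivWithin 2 (fs k) (Set.Icc (-tAux k) (tAux k)) x)
    (hf0 : ∀ k, fs k 0 = 0)
    (hf'0 : ∀ k, derivWithin (fs k) (Set.Icc (-tAux k) (tAux k)) 0 = 0)
    (hbnd : ∀ r : ℕ, ∃ M : ℝ, ∀ k, ∀ x ∈ Set.Icc (-tAux k) (tAux k),
      |iteratedDerivWithin r (fs k) (Set.Icc (-tAux k) (tAux k)) x| ≤ M) :
    ∃ K : ℕ, 0 < K ∧ ∃ f : ℝ → ℝ, ContDiff ℝ (⊤ : ℕ∞) f ∧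
      -- (a)
      Pliable 0 (3 * tAux K) 0 f ∧
      -- (b)
      (∀ x ∈ Set.Ioc 0 (3 * tAux K), 0 < deriv f x ∧ 0 < iteratedDeriv 2 f x) ∧
      (∀ r : ℕ, iteratedDeriv r f 0 = 0) ∧
      -- (c)
      (∀ k : ℕ, K ≤ k → ∀ x : ℝ, |x - tAux k| < tAux (k + 1) →
        deriv f x =
          b k * derivWithin (fs k) (Set.Icc (-tAux k) (tAux k)) (x - tAux k) + b k) := by
  -- the main construction
  have hfacts := fun k => deriv_facts (tAux k) (tAux_pos k) (fs k) (hfsm k)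
  obtain ⟨M, hM⟩ := hbnd 2
  set F : ℕ → ℝ → ℝ := fun k => derivWithin (fs k) (Icc (-tAux k) (tAux k)) with hFdef
  have hF1 : ∀ k, ∀ y ∈ Ioo (-tAux k) (tAux k), ContDiffAt ℝ (⊤ : ℕ∞) (F k) y :=
    fun k => (hfacts k).1
  have hF2 : ∀ k i, ∀ y ∈ Ioo (-tAux k) (tAux k), iteratedDeriv i (F k) y =
      iteratedDerivWithin (i + 1) (fs k) (Icc (-tAux k) (tAux k)) y := fun k => (hfacts k).2.1
  have hF3 : ∀ k, ∀ y ∈ Ioo (-tAux k) (tAux k), HasDerivAt (F k)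
      (iteratedDerivWithin 2 (fs k) (Icc (-tAux k) (tAux k)) y) y := fun k => (hfacts k).2.2
  have hF0 : ∀ k, F k 0 = 0 := hf'0
  have hM0 : 0 ≤ M := (abs_nonneg _).trans
    (hM 0 0 ⟨by linarith [tAux_pos 0], (tAux_pos 0).le⟩)
  have hFM : ∀ k, ∀ y ∈ Ioo (-tAux k) (tAux k), |F k y| ≤ M * tAux k := by
    intro k y hy
    have ht := tAux_pos k
    have := (convex_Ioo (-tAux k) (tAux k)).norm_image_sub_le_of_norm_hasDerivWithin_le
      (f := F k) (C := M) (x := 0) (y := y)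
      (fun z hz => (hF3 k z hz).hasDerivWithinAt)
      (fun z hz => hM k z (Ioo_subset_Icc_self hz)) ⟨by linarith, ht⟩ hy
    rw [hF0, sub_zero, sub_zero, Real.norm_eq_abs, Real.norm_eq_abs] at this
    refine this.trans (mul_le_mul_of_nonneg_left ?_ hM0)
    exact abs_le.2 ⟨hy.1.le, hy.2.le⟩
  -- choice of the starting index
  obtain ⟨N₀, hN₀⟩ := pow_unbounded_of_one_lt (4 * M) (by norm_num : (1 : ℝ) < 4)
  set N := N₀ + 1 with hNdef
  have hMt : ∀ k, N ≤ k → M * tAux k ≤ 1 / 4 := by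
    intro k hk
    have h1 : (4 : ℝ) ^ N₀ ≤ 4 ^ k := pow_le_pow_right₀ (by norm_num) (by omega)
    have h2 : 4 * M ≤ 4 ^ k := hN₀.le.trans h1
    unfold tAux
    rw [← div_eq_mul_inv, div_le_iff₀ (by positivity)]
    linarith
  have hdom : ∀ k x, 0 < 4 ^ k * x → 4 ^ k * x < 2 → x - tAux k ∈ Ioo (-tAux k) (tAux k) := by
    intro k x h1 h2
    have h4 : (0 : ℝ) < 4 ^ k := by positivity
    have hx : 0 < x := (mul_pos_iff_of_pos_left h4).1 h1
    have hx2 : x < 2 * tAux k := by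
      unfold tAux
      rw [← div_eq_mul_inv, lt_div_iff₀ h4]
      linarith
    constructor <;> linarith
  set φ : ℕ → ℝ → ℝ := fun k x => b k * F k (x - tAux k) + b k with hφdef
  have hq : ∀ k x, 0 < 4 ^ k * x → 4 ^ k * x < 2 →
      ContDiffAt ℝ (⊤ : ℕ∞) (fun x => F k (x - tAux k)) x := fun k x h1 h2 =>
    ContDiffAt.comp x (g := F k) (f := fun x => x - tAux k) (hF1 k _ (hdom k x h1 h2))
      (by fun_prop)
  have hφ : ∀ k x, 0 < 4 ^ k * x → 4 ^ k * x < 2 → ContDiffAt ℝ (⊤ : ℕ∞) (φ k) x :=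
    fun k x h1 h2 => (contDiffAt_const.mul (hq k x h1 h2)).add contDiffAt_const
  have hφb : ∀ i, ∃ A : ℝ, 0 ≤ A ∧ ∀ k x, 0 < 4 ^ k * x → 4 ^ k * x < 2 →
      |iteratedDeriv i (φ k) x| ≤ A * b k := by
    intro i
    obtain ⟨C, hC⟩ := hbnd (i + 1)
    have hC0 : 0 ≤ C := (abs_nonneg _).trans
      (hC 0 0 ⟨by linarith [tAux_pos 0], (tAux_pos 0).le⟩)
    refine ⟨C + 1, by linarith, fun k x h1 h2 => ?_⟩
    have hy := hdom k x h1 h2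
    have hCx := hC k _ (Ioo_subset_Icc_self hy)
    rw [← hF2 k i _ hy] at hCx
    have hbk := hbpos k
    rcases Nat.eq_zero_or_pos i with rfl | hi
    · rw [iteratedDeriv_zero] at hCx ⊢
      simp only [hφdef]
      rw [show b k * F k (x - tAux k) + b k = b k * (F k (x - tAux k) + 1) by ring, abs_mul,
        abs_of_pos hbk, mul_comm]
      refine mul_le_mul_of_nonneg_right ((abs_add_le _ _).trans ?_) hbk.le
      rw [abs_one]; linarith
    · have e : φ k = fun x => b k + b k * F k (x - tAux k) := by
        funext x; simp only [hφdef]; ring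
      rw [e, iteratedDeriv_const_add hi, iteratedDeriv_const_mul (f := fun x => F k (x - tAux k)) _
        ((hq k x h1 h2).of_le (by exact_mod_cast le_top)), iteratedDeriv_comp_sub_const, abs_mul,
        abs_of_pos hbk, mul_comm]
      exact mul_le_mul_of_nonneg_right (by linarith) hbk.le
  have hφd : ∀ k x, 0 < 4 ^ k * x → 4 ^ k * x < 2 → ∃ d, 0 < d ∧ HasDerivAt (φ k) d x := by
    intro k x h1 h2
    have hy := hdom k x h1 h2
    refine ⟨b k * iteratedDerivWithin 2 (fs k) (Icc (-tAux k) (tAux k)) (x - tAux k),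
      mul_pos (hbpos k) (hf'' k _ (Ioo_subset_Icc_self hy)), ?_⟩
    exact (((hF3 k _ hy).comp_sub_const x (tAux k)).const_mul (b k)).add_const (b k)
  have hφlo : ∀ k, N ≤ k → ∀ x, 0 < 4 ^ k * x → 4 ^ k * x < 2 →
      3 / 4 * b k ≤ φ k x ∧ φ k x ≤ 5 / 4 * b k := by
    intro k hk x h1 h2
    have h3 := abs_le.1 ((hFM k _ (hdom k x h1 h2)).trans (hMt k hk))
    have hb := hbpos k
    simp only [hφdef]
    constructor
    · nlinarith [h3.1]
    · nlinarith [h3.2]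
  have hbhalf : ∀ k, b (k + 1) ≤ b k / 2 := by
    intro k
    have h1 := hbdec k
    have h4 : (0 : ℝ) < 2 ^ k := by positivity
    rw [pow_succ, mul_assoc] at h1
    have := le_of_mul_le_mul_left h1 h4
    linarith
  set h : ℝ → ℝ := fun x => ∑' k : ℕ, psBump (4 ^ (k + N) * x) * φ (k + N) x with hhdef
  have hsm : ContDiff ℝ (⊤ : ℕ∞) h := glue b hbpos hbsup φ hφ hφb N
  have hneg : ∀ x ≤ 0, h x = 0 := by
    intro x hx
    have : ∀ k : ℕ, psBump (4 ^ (k + N) * x) * φ (k + N) x = 0 := by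
      intro k
      have : (4 : ℝ) ^ (k + N) * x ≤ 0 := mul_nonpos_of_nonneg_of_nonpos (by positivity) hx
      rw [psBump_zero_left (by linarith), zero_mul]
    simp only [hhdef, this, tsum_zero]
  have hA : ∀ k, N ≤ k → ∀ x, 7 / 16 < 4 ^ k * x → 4 ^ k * x < 3 / 2 → h x = φ k x := by
    intro k hk x h1 h2
    have e4 : (4 : ℝ) ^ (k + 1) * x = 4 * (4 ^ k * x) := by ring
    have := glue_near φ N k hk x (by linarith) h2.le
    simp only [hhdef]
    rw [this, psBump_zero_right (y := 4 ^ (k + 1) * x) (by linarith)]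
    unfold psBump
    rw [thRamp_one (by linarith), thRamp_zero (by linarith)]
    ring
  have hB : ∀ k, N ≤ k → ∀ x, 7 / 64 < 4 ^ k * x → 4 ^ k * x < 1 / 2 →
      h x = thRamp (4 ^ k * x) * φ k x + (1 - thRamp (4 ^ k * x)) * φ (k + 1) x := by
    intro k hk x h1 h2
    have e4 : (4 : ℝ) ^ (k + 1) * x = 4 * (4 ^ k * x) := by ring
    have e5 : 4 * (4 ^ k * x) / 4 = 4 ^ k * x := by ring
    have := glue_near φ N k hk x (by linarith) (by linarith)
    simp only [hhdef]
    rw [this, e4]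
    unfold psBump
    rw [e5, thRamp_one (y := 4 * (4 ^ k * x)) (by linarith),
      thRamp_zero (y := 4 ^ k * x / 4) (by linarith)]
    ring
  have hpos : ∀ x ∈ Ioc 0 (3 * tAux (N + 1)), 0 < h x ∧ 0 < deriv h x := by
    intro x hx
    obtain ⟨k, hk, h1, h2⟩ := cover N hx.1 hx.2
    have hcont : Continuous fun x : ℝ => 4 ^ k * x := by fun_prop
    rcases lt_or_ge (7 / 16) (4 ^ k * x) with hlt | hge
    · have hev : h =ᶠ[𝓝 x] φ k := by
        filter_upwards [(isOpen_Ioo.preimage hcont).mem_nhds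
          (show 4 ^ k * x ∈ Ioo (7 / 16 : ℝ) (3 / 2) from ⟨hlt, by linarith⟩)] with z hz
        exact hA k hk z hz.1 hz.2
      obtain ⟨d, hd, hdd⟩ := hφd k x (by linarith) (by linarith)
      rw [hev.deriv_eq, hdd.deriv, hev.eq_of_nhds]
      refine ⟨?_, hd⟩
      have := (hφlo k hk x (by linarith) (by linarith)).1
      have := hbpos k
      linarith
    · have hev : h =ᶠ[𝓝 x] fun x =>
          thRamp (4 ^ k * x) * φ k x + (1 - thRamp (4 ^ k * x)) * φ (k + 1) x := by
        filter_upwards [(isOpen_Ioo.preimage hcont).mem_nhds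
          (show 4 ^ k * x ∈ Ioo (7 / 64 : ℝ) (1 / 2) from ⟨by linarith, by linarith⟩)] with z hz
        exact hB k hk z hz.1 hz.2
      have e4 : (4 : ℝ) ^ (k + 1) * x = 4 * (4 ^ k * x) := by ring
      obtain ⟨d, hd, hdd⟩ := hφd k x (by linarith) (by linarith)
      obtain ⟨d', hd', hdd'⟩ := hφd (k + 1) x (by linarith) (by linarith)
      have p1 := (hφlo k hk x (by linarith) (by linarith)).1
      have p2 := hφlo (k + 1) (by omega) x (by linarith) (by linarith)
      have p3 := hbhalf k
      have p4 := hbpos k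
      have p5 := hbpos (k + 1)
      have hmono : Monotone fun x : ℝ => thRamp (4 ^ k * x) := fun y z hyz =>
        thRamp_mono (mul_le_mul_of_nonneg_left hyz (by positivity))
      have hdiff : DifferentiableAt ℝ (fun x : ℝ => thRamp (4 ^ k * x)) x := by
        have : ContDiff ℝ (⊤ : ℕ∞) (fun x : ℝ => thRamp (4 ^ k * x)) :=
          thRamp_contDiff.comp (by fun_prop)
        exact (this.differentiable (by simp)) x
      have hth := hdiff.hasDerivAt
      have hthn : 0 ≤ deriv (fun x : ℝ => thRamp (4 ^ k * x)) x := hmono.deriv_nonneg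
      set θ' := deriv (fun x : ℝ => thRamp (4 ^ k * x)) x
      have hD := (hth.mul hdd).add ((hth.const_sub 1).mul hdd')
      have t0 := thRamp_nonneg (4 ^ k * x)
      have t1 := thRamp_le_one (4 ^ k * x)
      have hconv : ∀ p q : ℝ, 0 < p → 0 < q →
          0 < thRamp (4 ^ k * x) * p + (1 - thRamp (4 ^ k * x)) * q := by
        intro p q hp hq
        rcases t0.eq_or_lt with h0 | h0
        · rw [← h0]; linarith
        · have := mul_pos h0 hp
          have := mul_nonneg (sub_nonneg.2 t1) hq.le
          linarith
      refine ⟨?_, ?_⟩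
      · rw [hev.eq_of_nhds]
        exact hconv _ _ (by linarith) (by linarith)
      · rw [hev.deriv_eq]
        have hD' := hD.deriv
        have e : deriv (fun x =>
          thRamp (4 ^ k * x) * φ k x + (1 - thRamp (4 ^ k * x)) * φ (k + 1) x) x =
          (θ' * φ k x + thRamp (4 ^ k * x) * d) +
            (-θ' * φ (k + 1) x + (1 - thRamp (4 ^ k * x)) * d') := hD'
        rw [e]
        have q1 := hconv d d' hd hd'
        have q2 : 0 ≤ θ' * (φ k x - φ (k + 1) x) := mul_nonneg hthn (by linarith [p2.2])
        linarith
  -- the antiderivative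
  set f : ℝ → ℝ := fun x => ∫ t in (0 : ℝ)..x, h t with hfdef
  have hfd : ∀ x, HasDerivAt f (h x) x := fun x =>
    intervalIntegral.integral_hasDerivAt_right (hsm.continuous.intervalIntegrable _ _)
      (hsm.continuous.stronglyMeasurableAtFilter _ _) hsm.continuous.continuousAt
  have hfderiv : deriv f = h := funext fun x => (hfd x).deriv
  have hfsmooth : ContDiff ℝ (⊤ : ℕ∞) f :=
    contDiff_infty_iff_deriv.2 ⟨fun x => (hfd x).differentiableAt, by rw [hfderiv]; exact hsm⟩
  have hfneg : ∀ x ≤ 0, f x = 0 := by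
    intro x hx
    simp only [hfdef]
    rw [intervalIntegral.integral_congr (g := fun _ => (0 : ℝ))]
    · simp
    · intro t ht
      rw [uIcc_of_ge hx] at ht
      exact hneg t ht.2
  have hflat := flat_of_zero f hfsmooth hfneg
  refine ⟨N + 1, by omega, f, hfsmooth, pliable_of_flat f hfsmooth hflat N (by omega), ?_,
    hflat, ?_⟩
  · intro x hx
    rw [iteratedDeriv_succ, iteratedDeriv_one, hfderiv]
    exact hpos x hx
  · intro k hk x hx
    rw [hfderiv]
    rw [tAux_succ, abs_lt] at hx
    have h4 : (0 : ℝ) < 4 ^ k := by positivity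
    have ht := tAux_mul k
    have e1 := mul_lt_mul_of_pos_left (show 3 / 4 * tAux k < x by linarith [hx.1]) h4
    have e2 := mul_lt_mul_of_pos_left (show x < 5 / 4 * tAux k by linarith [hx.2]) h4
    exact hA k (by omega) x (by linarith) (by linarith)
end
end
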